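/- arXiv:2503.02406 — 12 statements merged into one kernel-verified Lean document; each statement's English description precedes it below -/
import Mathlib

section
/- Let n ≥ 0, s ≥ 0 and ψ ∈ [0,π]. Suppose γ : ℝ → ℂ^{n+1} is a smooth curve satisfying the linear ODE γ''(t) − i·s·γ'(t) + (1 − s·cos ψ)·γ(t) = 0 for all t ∈ ℝ, together with the initial conditions |γ(0)| = 1, |γ'(0)| = 1, Re⟨γ(0), γ'(0)⟩ = 0 and Re⟨i·γ(0), γ'(0)⟩ = cos ψ. Then for every t ∈ ℝ one has |γ(t)| = 1, |γ'(t)| = 1, Re⟨γ(t), γ'(t)⟩ = 0 and Re⟨i·γ(t), γ'(t)⟩ = cos ψ; that is, the curve stays on the unit sphere, the speed and the contact angle ψ are integrals of motion. -/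
noncomputable section

open scoped Real

/-- Hermitian product on `ℂ^{n+1}`, ℂ-linear in the first argument and
conjugate-linear in the second (paper convention). -/
def herm {n : ℕ} (x y : EuclideanSpace ℂ (Fin (n + 1))) : ℂ := inner ℂ y x

/-- Norm of the point `C_s(ψ) = (−s/2 + cos ψ, sin ψ) ∈ ℝ²`, i.e.
`|C_s(ψ)| = sqrt(s²/4 + 1 − s cos ψ)`. -/
def normC (s ψ : ℝ) : ℝ := Real.sqrt (s ^ 2 / 4 + 1 - s * Real.cos ψ)

/-- Angle of `C_s(ψ)` with the positive x-axis: the unique `τ ∈ [0,π]` with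
`cos τ = (−s/2 + cos ψ)/|C_s(ψ)|`. -/
def argC (s ψ : ℝ) : ℝ := Real.arccos ((-s / 2 + Real.cos ψ) / normC s ψ)

/-- `γ` is a unit-speed magnetic geodesic of strength `s` with contact angle `ψ`,
in the paper's ambient-space formulation: `γ'' − i·s·γ' + (1 − s·cos ψ)·γ = 0`,
`|γ(0)| = 1`, `|γ'(0)| = 1`, `Re⟨γ(0),γ'(0)⟩ = 0`, `Re⟨i·γ(0),γ'(0)⟩ = cos ψ`. -/
def IsMagGeo {n : ℕ} (s ψ : ℝ) (γ : ℝ → EuclideanSpace ℂ (Fin (n + 1))) : Prop :=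
  ContDiff ℝ (⊤ : ℕ∞) γ ∧
  (∀ t : ℝ, deriv (deriv γ) t - ((s : ℂ) * Complex.I) • deriv γ t
      + ((1 : ℂ) - (s : ℂ) * (Real.cos ψ : ℂ)) • γ t = 0) ∧
  ‖γ 0‖ = 1 ∧ ‖deriv γ 0‖ = 1 ∧ (herm (γ 0) (deriv γ 0)).re = 0 ∧
  (herm (Complex.I • γ 0) (deriv γ 0)).re = Real.cos ψ

/-- The curve `γ(t) = e^{i s t/2}(e^{−i|C_s(ψ)|t} w₀ + e^{i|C_s(ψ)|t} w₁)`. -/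
def magCurve {n : ℕ} (s ψ : ℝ) (w₀ w₁ : EuclideanSpace ℂ (Fin (n + 1))) (t : ℝ) :
    EuclideanSpace ℂ (Fin (n + 1)) :=
  Complex.exp (Complex.I * s * t / 2) •
    (Complex.exp (-(Complex.I * normC s ψ * t)) • w₀ +
     Complex.exp (Complex.I * normC s ψ * t) • w₁)

/-- The Clifford torus `𝕋²_{w₀,w₁} = {λ₀ w₀ + λ₁ w₁ : |λ₀| = |λ₁| = 1}`. -/
def cliffordTorus {n : ℕ} (w₀ w₁ : EuclideanSpace ℂ (Fin (n + 1))) :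
    Set (EuclideanSpace ℂ (Fin (n + 1))) :=
  {x | ∃ l₀ l₁ : ℂ, ‖l₀‖ = 1 ∧ ‖l₁‖ = 1 ∧ x = l₀ • w₀ + l₁ • w₁}

/-- along a solution of the ambient-space magnetic geodesic ODE with
unit initial data, the norm, the speed, orthogonality of position and velocity
and the contact angle are all conserved. -/
theorem stmt_0 {n : ℕ} (s ψ : ℝ) (hs : 0 ≤ s) (hψ : ψ ∈ Set.Icc 0 π)
    (γ : ℝ → EuclideanSpace ℂ (Fin (n + 1)))
    (hsmooth : ContDiff ℝ (⊤ : ℕ∞) γ)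
    (hode : ∀ t : ℝ, deriv (deriv γ) t - ((s : ℂ) * Complex.I) • deriv γ t
      + ((1 : ℂ) - (s : ℂ) * (Real.cos ψ : ℂ)) • γ t = 0)
    (h0 : ‖γ 0‖ = 1) (h1 : ‖deriv γ 0‖ = 1)
    (h2 : (herm (γ 0) (deriv γ 0)).re = 0)
    (h3 : (herm (Complex.I • γ 0) (deriv γ 0)).re = Real.cos ψ) :
    ∀ t : ℝ, ‖γ t‖ = 1 ∧ ‖deriv γ t‖ = 1 ∧ (herm (γ t) (deriv γ t)).re = 0 ∧
      (herm (Complex.I • γ t) (deriv γ t)).re = Real.cos ψ := by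
  have hd1 : ∀ t, HasDerivAt γ (deriv γ t) t := fun t =>
    ((hsmooth.differentiable (by simp)) t).hasDerivAt
  have hsm2 : ContDiff ℝ 1 (deriv γ) := by
    have h2' : ContDiff ℝ (1 + 1) γ := hsmooth.of_le (by
      rw [one_add_one_eq_two]; exact WithTop.coe_le_coe.2 (le_top (a := (2 : ℕ∞))))
    exact (contDiff_succ_iff_deriv.1 h2').2.2
  have hd2 : ∀ t, HasDerivAt (deriv γ) (deriv (deriv γ) t) t := fun t =>
    ((hsm2.differentiable (by simp)) t).hasDerivAt
  have hode' : ∀ t, deriv (deriv γ) t = ((s : ℂ) * Complex.I) • deriv γ t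
      - ((1 : ℂ) - (s : ℂ) * (Real.cos ψ : ℂ)) • γ t := by
    intro t
    have h := hode t
    rw [sub_add, sub_eq_zero] at h
    exact h
  obtain ⟨c, hc⟩ : ∃ c, c = Real.cos ψ := ⟨_, rfl⟩
  have hc1 : c ^ 2 ≤ 1 := by rw [hc]; exact Real.cos_sq_le_one ψ
  rw [← hc] at hode' h3 ⊢
  have hre : ∀ (f : ℝ → ℂ) (f' : ℂ) (t : ℝ), HasDerivAt f f' t →
      HasDerivAt (fun x => (f x).re) f'.re t := fun f f' t h =>
    (Complex.reCLM.hasFDerivAt.comp_hasDerivAt t h)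
  have him : ∀ (f : ℝ → ℂ) (f' : ℂ) (t : ℝ), HasDerivAt f f' t →
      HasDerivAt (fun x => (f x).im) f'.im t := fun f f' t h =>
    (Complex.imCLM.hasFDerivAt.comp_hasDerivAt t h)
  obtain ⟨a, ha⟩ : ∃ a : ℝ → ℝ, a = fun t => (inner ℂ (γ t) (γ t)).re := ⟨_, rfl⟩
  obtain ⟨b, hb⟩ : ∃ a : ℝ → ℝ, a = fun t => (inner ℂ (deriv γ t) (deriv γ t)).re := ⟨_, rfl⟩
  obtain ⟨r, hr⟩ : ∃ a : ℝ → ℝ, a = fun t => (inner ℂ (deriv γ t) (γ t)).re := ⟨_, rfl⟩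
  obtain ⟨q, hq⟩ : ∃ a : ℝ → ℝ, a = fun t => (inner ℂ (deriv γ t) (γ t)).im := ⟨_, rfl⟩
  have sw : ∀ t, inner ℂ (γ t) (deriv γ t) = (starRingEnd ℂ) (inner ℂ (deriv γ t) (γ t)) :=
    fun t => (inner_conj_symm _ _).symm
  have aim : ∀ t, (inner ℂ (γ t) (γ t)).im = 0 := fun t => inner_self_im (𝕜 := ℂ) _
  have bim : ∀ t, (inner ℂ (deriv γ t) (deriv γ t)).im = 0 := fun t => inner_self_im (𝕜 := ℂ) _
  have da : ∀ t, HasDerivAt a (2 * r t) t := by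
    intro t
    have h := hre _ _ t ((hd1 t).inner ℂ (hd1 t))
    rw [ha, hr]
    convert h using 1
    simp [-inner_conj_symm, sw t]; ring
  have db : ∀ t, HasDerivAt b (-2 * (1 - s * c) * r t) t := by
    intro t
    have h := hre _ _ t ((hd2 t).inner ℂ (hd2 t))
    rw [hb, hr]
    convert h using 1
    rw [hode' t]
    simp only [inner_sub_left, inner_sub_right, inner_smul_left, inner_smul_right]
    simp [-inner_conj_symm, -inner_self_eq_norm_sq_to_K, sw t, bim t]; ring
  have dH := fun t => (hd2 t).inner ℂ (hd1 t)
  have dr : ∀ t, HasDerivAt r (b t + s * q t - (1 - s * c) * a t) t := by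
    intro t
    have h := hre _ _ t (dH t)
    rw [hr, hb, hq, ha]
    convert h using 1
    rw [hode' t]
    simp only [inner_sub_left, inner_sub_right, inner_smul_left, inner_smul_right]
    simp [-inner_self_eq_norm_sq_to_K, bim t, aim t]; ring
  have dq : ∀ t, HasDerivAt q (- s * r t) t := by
    intro t
    have h := him _ _ t (dH t)
    rw [hr, hq]
    convert h using 1
    rw [hode' t]
    simp only [inner_sub_left, inner_sub_right, inner_smul_left, inner_smul_right]
    simp [-inner_self_eq_norm_sq_to_K, bim t, aim t]
  have na : ∀ t, a t = ‖γ t‖ ^ 2 := fun t => by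
    rw [ha]; exact inner_self_eq_norm_sq (𝕜 := ℂ) _
  have nb : ∀ t, b t = ‖deriv γ t‖ ^ 2 := fun t => by
    rw [hb]; exact inner_self_eq_norm_sq (𝕜 := ℂ) _
  have nr : ∀ t, (herm (γ t) (deriv γ t)).re = r t := fun t => by rw [hr]; rfl
  have nq : ∀ t, (herm (Complex.I • γ t) (deriv γ t)).re = - q t := fun t => by
    rw [hq]; simp [herm, inner_smul_right]
  have a0 : a 0 = 1 := by rw [na, h0]; norm_num
  have b0 : b 0 = 1 := by rw [nb, h1]; norm_num
  have r0 : r 0 = 0 := by rw [← nr, h2]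
  have q0 : q 0 = -c := by rw [← h3, nq]; ring
  have cst : ∀ f : ℝ → ℝ, (∀ t, HasDerivAt f 0 t) → ∀ t, f t = f 0 := fun f hf t =>
    is_const_of_deriv_eq_zero (fun x => (hf x).differentiableAt) (fun x => (hf x).deriv) t 0
  have e1 : ∀ t, b t + (1 - s * c) * a t = 1 + (1 - s * c) := by
    intro t
    have := cst (fun t => b t + (1 - s * c) * a t) (fun t => by
      exact ((db t).add ((da t).const_mul (1 - s * c))).congr_deriv (by ring)) t
    simpa [a0, b0] using this
  have e2 : ∀ t, q t + s / 2 * a t = -c + s / 2 := by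
    intro t
    have := cst (fun t => q t + s / 2 * a t) (fun t => by
      exact ((dq t).add ((da t).const_mul (s / 2))).congr_deriv (by ring)) t
    simpa [a0, q0] using this
  have e3 : ∀ t, (s ^ 2 - 4 * s * c + 4) / 2 * (a t - 1) ^ 2 + 2 * r t ^ 2 = 0 := by
    intro t
    have := cst (fun t => (s ^ 2 - 4 * s * c + 4) / 2 * (a t - 1) ^ 2 + 2 * r t ^ 2) (fun t => by
      refine (((((da t).sub_const 1).pow 2).const_mul ((s ^ 2 - 4 * s * c + 4) / 2)).add
        (((dr t).pow 2).const_mul 2)).congr_deriv ?_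
      have hb' : b t = 1 + (1 - s * c) - (1 - s * c) * a t := by linarith [e1 t]
      have hq' : q t = -c + s / 2 - s / 2 * a t := by linarith [e2 t]
      rw [hb', hq']; simp; ring) t
    simpa [a0, r0] using this
  have w0 : 0 ≤ s ^ 2 - 4 * s * c + 4 := by nlinarith [sq_nonneg (s - 2 * c)]
  have rz : ∀ t, r t = 0 := by
    intro t
    have : 0 ≤ (s ^ 2 - 4 * s * c + 4) / 2 * (a t - 1) ^ 2 := by positivity
    have : r t ^ 2 = 0 := by nlinarith [e3 t, sq_nonneg (r t)]
    exact pow_eq_zero_iff (two_ne_zero) |>.1 this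
  have az : ∀ t, a t = 1 := fun t => by
    rw [cst a (fun t => by simpa [rz t] using da t) t, a0]
  intro t
  have hat := az t
  have hbt : b t = 1 := by have := e1 t; rw [hat] at this; linarith
  have hqt : q t = -c := by have := e2 t; rw [hat] at this; linarith
  refine ⟨?_, ?_, ?_, ?_⟩
  · rw [na] at hat
    exact (pow_eq_one_iff_of_nonneg (norm_nonneg _) two_ne_zero).1 hat
  · rw [nb] at hbt
    exact (pow_eq_one_iff_of_nonneg (norm_nonneg _) two_ne_zero).1 hbt
  · rw [nr, rz]
  · rw [nq, hqt]; ring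
end
end

section
/- Let n ≥ 0, s ≥ 0 and ψ ∈ [0,π] with (s,ψ) ≠ (2,0). Let (w₀,w₁) be an admissible pair in ℂ^{n+1} with |w₁|² − |w₀|² = cos(Arg(C_s(ψ))) (equivalently, the Clifford torus 𝕋²_{w₀,w₁} has width Arg(C_s(ψ)) up to the identification τ ∼ π − τ). Then the curve γ(t) := e^{i s t/2}·(e^{−i|C_s(ψ)|t}·w₀ + e^{i|C_s(ψ)|t}·w₁) is a unit-speed magnetic geodesic of strength s with contact angle ψ, i.e. it satisfies γ''(t) − i·s·γ'(t) + (1 − s·cos ψ)·γ(t) = 0 for all t, |γ(0)| = 1, |γ'(0)| = 1, Re⟨γ(0),γ'(0)⟩ = 0, Re⟨i·γ(0),γ'(0)⟩ = cos ψ; moreover γ(t) ∈ 𝕋²_{w₀,w₁} for every t ∈ ℝ. -/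
noncomputable section

open scoped Real

theorem aux_c (s ψ : ℝ) : normC s ψ ^ 2 = s ^ 2 / 4 + 1 - s * Real.cos ψ ∧
    normC s ψ * Real.cos (argC s ψ) = -s / 2 + Real.cos ψ := by
  have e : s ^ 2 / 4 + 1 - s * Real.cos ψ = (-s / 2 + Real.cos ψ) ^ 2 + Real.sin ψ ^ 2 := by
    have := Real.sin_sq_add_cos_sq ψ
    linear_combination -this
  have h0 : 0 ≤ normC s ψ := Real.sqrt_nonneg _
  have h2 : normC s ψ ^ 2 = s ^ 2 / 4 + 1 - s * Real.cos ψ := by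
    unfold normC
    apply Real.sq_sqrt
    rw [e]; positivity
  refine ⟨h2, ?_⟩
  have h3 : (-s / 2 + Real.cos ψ) ^ 2 ≤ normC s ψ ^ 2 := by
    rw [h2, e]; nlinarith [sq_nonneg (Real.sin ψ)]
  have h4 := abs_le_of_sq_le_sq' h3 h0
  rcases h0.eq_or_lt with hc | hc
  · rw [← hc] at h4 ⊢
    linarith [h4.1, h4.2]
  · unfold argC
    rw [Real.cos_arccos]
    · field_simp
    · rw [le_div_iff₀ hc]; linarith [h4.1]
    · rw [div_le_iff₀ hc]; linarith [h4.2]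

theorem aux_curve {n : ℕ} (s ψ : ℝ) (w₀ w₁ : EuclideanSpace ℂ (Fin (n + 1))) :
    magCurve s ψ w₀ w₁ = fun t : ℝ =>
      Complex.exp (((s / 2 - normC s ψ : ℝ) : ℂ) * Complex.I * t) • w₀ +
      Complex.exp (((s / 2 + normC s ψ : ℝ) : ℂ) * Complex.I * t) • w₁ := by
  funext t
  unfold magCurve
  rw [smul_add, smul_smul, smul_smul, ← Complex.exp_add, ← Complex.exp_add]
  congr 3 <;> congr 1 <;> push_cast <;> ring

theorem aux_deriv {n : ℕ} (a b : ℂ) (w₀ w₁ : EuclideanSpace ℂ (Fin (n + 1))) :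
    deriv (fun t : ℝ => Complex.exp (a * t) • w₀ + Complex.exp (b * t) • w₁) =
      fun t : ℝ => Complex.exp (a * t) • (a • w₀) + Complex.exp (b * t) • (b • w₁) := by
  have k : ∀ (c : ℂ) (t : ℝ), HasDerivAt (fun t : ℝ => Complex.exp (c * t))
      (Complex.exp (c * t) * c) t := by
    intro c t
    have h1 : HasDerivAt (fun t : ℝ => c * (t : ℂ)) (c * 1) t :=
      (Complex.ofRealCLM.hasDerivAt (x := t)).const_mul c
    simpa using h1.cexp
  funext t
  rw [smul_smul, smul_smul]
  exact (((k a t).smul_const w₀).add ((k b t).smul_const w₁)).deriv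

theorem aux_inner {n : ℕ} (w₀ w₁ : EuclideanSpace ℂ (Fin (n + 1))) (h : herm w₀ w₁ = 0)
    (a b c d : ℂ) :
    inner ℂ (a • w₀ + b • w₁) (c • w₀ + d • w₁) =
      (starRingEnd ℂ a) * c * ((‖w₀‖ ^ 2 : ℝ) : ℂ) + (starRingEnd ℂ b) * d * ((‖w₁‖ ^ 2 : ℝ) : ℂ) := by
  have h1 : inner ℂ w₁ w₀ = (0 : ℂ) := h
  have h2 : inner ℂ w₀ w₁ = (0 : ℂ) := inner_eq_zero_symm.mp h1
  simp only [inner_add_left, inner_add_right, inner_smul_left, inner_smul_right, h1, h2,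
    inner_self_eq_norm_sq_to_K]
  push_cast
  simp only [Complex.coe_algebraMap]
  ring

theorem aux_norm {n : ℕ} (w₀ w₁ : EuclideanSpace ℂ (Fin (n + 1))) (h : herm w₀ w₁ = 0)
    (a b : ℂ) : ‖a • w₀ + b • w₁‖ ^ 2 = ‖a‖ ^ 2 * ‖w₀‖ ^ 2 + ‖b‖ ^ 2 * ‖w₁‖ ^ 2 := by
  have h1 := aux_inner w₀ w₁ h a b a b
  rw [inner_self_eq_norm_sq_to_K, ← Complex.normSq_eq_conj_mul_self,
    ← Complex.normSq_eq_conj_mul_self, Complex.normSq_eq_norm_sq, Complex.normSq_eq_norm_sq] at h1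
  simp only [Complex.coe_algebraMap] at h1
  exact_mod_cast h1

/-- for an admissible pair of width `Arg(C_s(ψ))`, the explicit curve
`magCurve s ψ w₀ w₁` is a unit-speed magnetic geodesic of strength `s` with contact
angle `ψ`, contained in the Clifford torus `𝕋²_{w₀,w₁}`. -/
theorem stmt_1 {n : ℕ} (s ψ : ℝ) (hs : 0 ≤ s) (hψ : ψ ∈ Set.Icc 0 π)
    (hne : (s, ψ) ≠ (2, 0))
    (w₀ w₁ : EuclideanSpace ℂ (Fin (n + 1)))
    (hadm : herm w₀ w₁ = 0 ∧ ‖w₀‖ ^ 2 + ‖w₁‖ ^ 2 = 1)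
    (hwidth : ‖w₁‖ ^ 2 - ‖w₀‖ ^ 2 = Real.cos (argC s ψ)) :
    IsMagGeo s ψ (magCurve s ψ w₀ w₁) ∧
      ∀ t : ℝ, magCurve s ψ w₀ w₁ t ∈ cliffordTorus w₀ w₁ := by
  obtain ⟨h, hn⟩ := hadm
  obtain ⟨hc, hcc⟩ := aux_c s ψ
  rw [← hwidth] at hcc
  rw [aux_curve]
  set c := normC s ψ
  refine ⟨⟨?_, ?_, ?_, ?_, ?_, ?_⟩, ?_⟩
  · have k : ∀ (a : ℂ), ContDiff ℝ (⊤ : ℕ∞) (fun t : ℝ => Complex.exp (a * t)) := fun a =>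
      (contDiff_const.mul Complex.ofRealCLM.contDiff).cexp
    exact ((k _).smul contDiff_const).add ((k _).smul contDiff_const)
  · intro t
    have hcC : (c : ℂ) ^ 2 = (s : ℂ) ^ 2 / 4 + 1 - s * (Real.cos ψ : ℂ) := by exact_mod_cast hc
    rw [aux_deriv, aux_deriv]
    simp only
    generalize Complex.exp _ = A
    generalize Complex.exp _ = B
    generalize (Real.cos ψ : ℂ) = x at *
    push_cast
    match_scalars
    · linear_combination (A * ((s:ℂ) / 2 - c) ^ 2 - A * s * ((s:ℂ) / 2 - c)) * Complex.I_sq - A * hcC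
    · linear_combination (B * ((s:ℂ) / 2 + c) ^ 2 - B * s * ((s:ℂ) / 2 + c)) * Complex.I_sq - B * hcC
  · have := aux_norm w₀ w₁ h 1 1
    rw [← sq_eq_sq₀ (norm_nonneg _) zero_le_one]
    simpa [hn] using this
  · have := aux_norm w₀ w₁ h (((s / 2 - c : ℝ) : ℂ) * Complex.I) (((s / 2 + c : ℝ) : ℂ) * Complex.I)
    rw [← sq_eq_sq₀ (norm_nonneg _) zero_le_one, aux_deriv]
    simp only [Complex.ofReal_zero, mul_zero, Complex.exp_zero, one_smul]
    rw [this]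
    simp only [norm_mul, Complex.norm_I, mul_one, Complex.norm_real, Real.norm_eq_abs, sq_abs]
    linear_combination hc + s * hcc + (s ^ 2 / 4 + c ^ 2) * hn - hn * 0
  · rw [aux_deriv]
    have := aux_inner w₀ w₁ h (((s / 2 - c : ℝ) : ℂ) * Complex.I) (((s / 2 + c : ℝ) : ℂ) * Complex.I) 1 1
    simp only [herm, Complex.ofReal_zero, mul_zero, Complex.exp_zero, one_smul] at this ⊢
    rw [this]
    simp [-Complex.ofReal_sub, -Complex.ofReal_add, -Complex.ofReal_pow]
  · rw [aux_deriv]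
    have := aux_inner w₀ w₁ h (((s / 2 - c : ℝ) : ℂ) * Complex.I) (((s / 2 + c : ℝ) : ℂ) * Complex.I)
      Complex.I Complex.I
    simp only [herm, Complex.ofReal_zero, mul_zero, Complex.exp_zero, one_smul, smul_add] at this ⊢
    rw [this]
    simp [-Complex.ofReal_sub, -Complex.ofReal_add, -Complex.ofReal_pow]
    linear_combination hcc + s / 2 * hn
  · intro t
    refine ⟨_, _, ?_, ?_, rfl⟩
    · rw [Complex.norm_exp]; simp
    · rw [Complex.norm_exp]; simp
end
end

section
/- Let n ≥ 0, s ≥ 0 and ψ ∈ [0,π] with (s,ψ) ≠ (2,0). Let (w₀,w₁) be an admissible pair in ℂ^{n+1} with |w₁|² − |w₀|² = cos(Arg(C_s(ψ))), and let γ(t) := e^{i s t/2}·(e^{−i|C_s(ψ)|t}·w₀ + e^{i|C_s(ψ)|t}·w₁). Then for all t₀, t₁ ∈ ℝ, writing T := t₁ − t₀, one has ⟨γ(t₀), γ(t₁)⟩ = e^{−i s T/2}·( cos(|C_s(ψ)|·T) − i·cos(Arg(C_s(ψ)))·sin(|C_s(ψ)|·T) ). In particular |⟨γ(t₀),γ(t₁)⟩|²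 = cos²(|C_s(ψ)|T) + cos²(Arg(C_s(ψ)))·sin²(|C_s(ψ)|T) ≥ cos²(Arg(C_s(ψ))). -/
noncomputable section

open scoped Real

/-- Hermitian product of two points of the magnetic geodesic
`magCurve s ψ w₀ w₁`, together with its absolute value squared and the
resulting lower bound `cos²(Arg(C_s(ψ)))`. -/
theorem stmt_3 {n : ℕ} (s ψ : ℝ) (hs : 0 ≤ s) (hψ : ψ ∈ Set.Icc 0 π)
    (hne : (s, ψ) ≠ (2, 0))
    (w₀ w₁ : EuclideanSpace ℂ (Fin (n + 1)))
    (hadm : herm w₀ w₁ = 0 ∧ ‖w₀‖ ^ 2 + ‖w₁‖ ^ 2 = 1)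
    (hwidth : ‖w₁‖ ^ 2 - ‖w₀‖ ^ 2 = Real.cos (argC s ψ)) :
    ∀ t₀ t₁ : ℝ,
      herm (magCurve s ψ w₀ w₁ t₀) (magCurve s ψ w₀ w₁ t₁) =
        Complex.exp (-(Complex.I * s * (t₁ - t₀) / 2)) *
          ((Real.cos (normC s ψ * (t₁ - t₀)) : ℂ) -
            Complex.I * (Real.cos (argC s ψ) : ℂ) *
              (Real.sin (normC s ψ * (t₁ - t₀)) : ℂ)) ∧
      ‖herm (magCurve s ψ w₀ w₁ t₀) (magCurve s ψ w₀ w₁ t₁)‖ ^ 2 =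
        Real.cos (normC s ψ * (t₁ - t₀)) ^ 2 +
          Real.cos (argC s ψ) ^ 2 * Real.sin (normC s ψ * (t₁ - t₀)) ^ 2 ∧
      Real.cos (argC s ψ) ^ 2 ≤
        ‖herm (magCurve s ψ w₀ w₁ t₀) (magCurve s ψ w₀ w₁ t₁)‖ ^ 2 := by
  intro t₀ t₁
  obtain ⟨h01, hsum⟩ := hadm
  have h01' : inner ℂ w₁ w₀ = 0 := h01
  have h10 : inner ℂ w₀ w₁ = 0 := inner_eq_zero_symm.mp h01'
  have hcos1 := Real.neg_one_le_cos (argC s ψ)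
  have hcos2 := Real.cos_le_one (argC s ψ)
  generalize Real.cos (argC s ψ) = k at *
  have key : herm (magCurve s ψ w₀ w₁ t₀) (magCurve s ψ w₀ w₁ t₁) =
        Complex.exp (-(Complex.I * s * (t₁ - t₀) / 2)) *
          ((Real.cos (normC s ψ * (t₁ - t₀)) : ℂ) -
            Complex.I * (k : ℂ) *
              (Real.sin (normC s ψ * (t₁ - t₀)) : ℂ)) := by
    have ha : ((‖w₀‖ : ℂ)) ^ 2 = (1 - k) / 2 := by
      have : ‖w₀‖ ^ 2 = (1 - k) / 2 := by linarith
      exact_mod_cast this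
    have hb : ((‖w₁‖ : ℂ)) ^ 2 = (1 + k) / 2 := by
      have : ‖w₁‖ ^ 2 = (1 + k) / 2 := by linarith
      exact_mod_cast this
    have e0 : inner ℂ w₀ w₀ = ((‖w₀‖ : ℂ)) ^ 2 := inner_self_eq_norm_sq_to_K w₀
    have e1 : inner ℂ w₁ w₁ = ((‖w₁‖ : ℂ)) ^ 2 := inner_self_eq_norm_sq_to_K w₁
    unfold herm magCurve
    generalize normC s ψ = c
    simp only [inner_smul_left, inner_smul_right, inner_add_left, inner_add_right, h01', h10,
      e0, e1, ha, hb, ← Complex.exp_conj, map_neg, map_mul, map_div₀, Complex.conj_I,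
      Complex.conj_ofReal, map_ofNat, mul_zero, add_zero, zero_add]
    have A : Complex.exp (-(Complex.I * s * (t₁ - t₀) / 2)) =
        Complex.exp (-Complex.I * s * t₁ / 2) * Complex.exp (Complex.I * s * t₀ / 2) := by
      rw [← Complex.exp_add]; congr 1; ring
    have B : Complex.exp ((c * (t₁ - t₀) : ℂ) * Complex.I) =
        Complex.exp (-(-Complex.I * c * t₁)) * Complex.exp (-(Complex.I * c * t₀)) := by
      rw [← Complex.exp_add]; congr 1; ring
    have C : Complex.exp (-(c * (t₁ - t₀) : ℂ) * Complex.I) =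
        Complex.exp (-Complex.I * c * t₁) * Complex.exp (Complex.I * c * t₀) := by
      rw [← Complex.exp_add]; congr 1; ring
    have hB := Complex.exp_mul_I (c * (t₁ - t₀) : ℂ)
    have hC := Complex.exp_mul_I (-(c * (t₁ - t₀) : ℂ))
    rw [Complex.cos_neg, Complex.sin_neg] at hC
    rw [A]
    push_cast
    rw [B] at hB
    rw [C] at hC
    linear_combination (Complex.exp (-Complex.I * s * t₁ / 2) * Complex.exp (Complex.I * s * t₀ / 2))
      * ((1 - k) / 2 * hB + (1 + k) / 2 * hC)
  have key2 : ‖herm (magCurve s ψ w₀ w₁ t₀) (magCurve s ψ w₀ w₁ t₁)‖ ^ 2 =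
        Real.cos (normC s ψ * (t₁ - t₀)) ^ 2 +
          k ^ 2 * Real.sin (normC s ψ * (t₁ - t₀)) ^ 2 := by
    rw [key, norm_mul]
    have h1 : ‖Complex.exp (-(Complex.I * s * (t₁ - t₀) / 2))‖ = 1 := by
      rw [show -(Complex.I * s * (t₁ - t₀) / 2) = ((-(s * (t₁ - t₀) / 2) : ℝ) : ℂ) * Complex.I by
        push_cast; ring]
      exact Complex.norm_exp_ofReal_mul_I _
    rw [h1, one_mul, ← Complex.normSq_eq_norm_sq, Complex.normSq_apply]
    generalize Real.cos (normC s ψ * (t₁ - t₀)) = x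
    generalize Real.sin (normC s ψ * (t₁ - t₀)) = y
    simp
    ring
  refine ⟨key, key2, ?_⟩
  rw [key2]
  have := Real.sin_sq_add_cos_sq (normC s ψ * (t₁ - t₀))
  have hk : k ^ 2 ≤ 1 := by nlinarith
  nlinarith [mul_nonneg (sub_nonneg.mpr hk) (sq_nonneg (Real.cos (normC s ψ * (t₁ - t₀))))]
end
end

section
/- Let n ≥ 0 and 0 ≤ s < 2. Then any two points q₀, q₁ on the unit sphere S^{2n+1} ⊂ ℂ^{n+1} are connected by a unit-speed magnetic geodesic of strength s: there exist ψ ∈ [0,π], a smooth curve γ : ℝ → ℂ^{n+1} satisfying γ''(t) − i·s·γ'(t) + (1 − s·cos ψ)·γ(t) = 0 with |γ(0)| = 1, |γ'(0)| = 1, Re⟨γ(0),γ'(0)⟩ = 0, Re⟨i·γ(0),γ'(0)⟩ = cos ψ, and times t₀, t₁ ∈ ℝ with γ(t₀) = q₀ and γ(t₁) = q₁. (In terms of the magnetic system (S^{2n+1}, g, dα), this is the supercritical case: unit-speed strength s corresponds to kinetic energy k = 1/(2s²), and s < 2 corresponds to k > 1/8, the Mañé critical value.) -/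
noncomputable section

open scoped Real

theorem aux_curve_s5 {n : ℕ} (s R k : ℝ) (hk : k ^ 2 ≤ 1)
    (hR : R ^ 2 + s * R * k + s ^ 2 / 4 = 1)
    (q u : EuclideanSpace ℂ (Fin (n + 1))) (hq : ‖q‖ = 1) (hqu : inner ℂ q u = 0)
    (hu : ‖u‖ ^ 2 = 1 - k ^ 2) (T : ℝ) :
    ∃ ψ ∈ Set.Icc (0 : ℝ) π, ∃ γ : ℝ → EuclideanSpace ℂ (Fin (n + 1)),
      IsMagGeo s ψ γ ∧ γ 0 = q ∧
      γ T = Complex.exp (Complex.I * ((s * T / 2 : ℝ) : ℂ)) •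
        ((((Real.cos (R * T) : ℝ) : ℂ) + Complex.I * k * (Real.sin (R * T) : ℝ)) • q
          + ((Real.sin (R * T) : ℝ) : ℂ) • u) := by
  have hc : (s / 2 + R * k) ^ 2 ≤ 1 := by
    nlinarith [mul_nonneg (sq_nonneg R) (sub_nonneg.2 hk)]
  have hc' := abs_le.1 ((sq_le_one_iff_abs_le_one _).1 hc)
  have hcos : Real.cos (Real.arccos (s / 2 + R * k)) = s / 2 + R * k :=
    Real.cos_arccos hc'.1 hc'.2
  let A : ℂ := Complex.I * (s / 2 + R)
  let B : ℂ := Complex.I * (s / 2 - R)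
  let w : EuclideanSpace ℂ (Fin (n + 1)) := ((1 + k) / 2 : ℂ) • q + (-Complex.I / 2) • u
  let z : EuclideanSpace ℂ (Fin (n + 1)) := ((1 - k) / 2 : ℂ) • q + (Complex.I / 2) • u
  have hexp : ∀ (A : ℂ) (t : ℝ), HasDerivAt (fun t : ℝ => Complex.exp (A * t))
      (Complex.exp (A * t) * A) t := by
    intro A t
    have h1 : HasDerivAt (fun t : ℂ => Complex.exp (A * t)) (Complex.exp (A * t) * A) (t : ℂ) := by
      simpa using ((hasDerivAt_id (t : ℂ)).const_mul A).cexp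
    exact h1.comp_ofReal
  have hD : ∀ (w z : EuclideanSpace ℂ (Fin (n + 1))),
      deriv (fun t : ℝ => Complex.exp (A * t) • w + Complex.exp (B * t) • z) =
      fun t : ℝ => Complex.exp (A * t) • (A • w) + Complex.exp (B * t) • (B • z) := by
    intro w z
    funext t
    have := (((hexp A t).smul_const w).add ((hexp B t).smul_const z)).deriv
    simp only [mul_smul] at this
    exact this
  have hqq : inner ℂ q q = (1 : ℂ) := by
    rw [inner_self_eq_norm_sq_to_K, hq]; simp
  have huq : inner ℂ u q = (0 : ℂ) := by
    rw [← inner_conj_symm, hqu]; simp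
  have h0 : w + z = q := by
    simp only [w, z]; module
  have h0' : A • w + B • z = (Complex.I * (s / 2 + R * k)) • q + (R : ℂ) • u := by
    simp only [w, z, A, B]
    match_scalars
    · ring
    · linear_combination (-R : ℂ) * Complex.I_sq
  refine ⟨Real.arccos (s / 2 + R * k), ⟨Real.arccos_nonneg _, Real.arccos_le_pi _⟩,
    fun t : ℝ => Complex.exp (A * t) • w + Complex.exp (B * t) • z, ⟨?_, ?_, ?_, ?_, ?_, ?_⟩, ?_, ?_⟩
  · have : ∀ A : ℂ, ContDiff ℝ (⊤ : ℕ∞) (fun t : ℝ => Complex.exp (A * t)) := by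
      intro A
      exact (contDiff_const.mul Complex.ofRealCLM.contDiff).cexp
    exact ((this A).smul contDiff_const).add ((this B).smul contDiff_const)
  · intro t
    rw [hD, hD, hcos]
    have hRc : (R : ℂ) ^ 2 + s * R * k + s ^ 2 / 4 = 1 := by exact_mod_cast hR
    clear_value w z
    match_scalars
    · simp only [A]; push_cast
      linear_combination (Complex.exp (Complex.I * (s / 2 + R) * t)) * ((s/2+R)^2 - s * (s/2+R)) * Complex.I_sq - Complex.exp (Complex.I * (s / 2 + R) * t) * hRc
    · simp only [B]; push_cast
      linear_combination (Complex.exp (Complex.I * (s / 2 - R) * t)) * ((s/2-R)^2 - s * (s/2-R)) * Complex.I_sq - Complex.exp (Complex.I * (s / 2 - R) * t) * hRc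
  · simp [h0, hq]
  · rw [hD]
    simp only [Complex.ofReal_zero, mul_zero, Complex.exp_zero, one_smul, h0']
    have : ‖(Complex.I * (s / 2 + R * k)) • q + (R : ℂ) • u‖ ^ 2 = 1 := by
      rw [@norm_add_sq ℂ, inner_smul_left, inner_smul_right, hqu, norm_smul, norm_smul, mul_pow, mul_pow, hu, hq]
      have : ‖Complex.I * ((s : ℂ) / 2 + R * k)‖ ^ 2 = (s / 2 + R * k) ^ 2 := by
        rw [norm_mul, Complex.norm_I, one_mul]
        have : ((s : ℂ) / 2 + R * k) = ((s / 2 + R * k : ℝ) : ℂ) := by push_cast; ring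
        rw [this, Complex.norm_real, Real.norm_eq_abs, sq_abs]
      rw [this]
      simp
      nlinarith
    exact (pow_eq_one_iff_of_nonneg (norm_nonneg _) two_ne_zero).1 this
  · rw [hD]
    simp only [Complex.ofReal_zero, mul_zero, Complex.exp_zero, one_smul, h0', h0, herm]
    rw [inner_add_left, inner_smul_left, inner_smul_left, hqq, huq]
    simp [map_ofNat]
  · rw [hD, hcos]
    simp only [Complex.ofReal_zero, mul_zero, Complex.exp_zero, one_smul, h0', h0, herm]
    rw [inner_add_left, inner_smul_left, inner_smul_left, inner_smul_right, inner_smul_right, hqq, huq]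
    simp [map_ofNat]
  · simp [h0]
  · have hA : Complex.exp (A * T) = Complex.exp (Complex.I * ((s * T / 2 : ℝ) : ℂ)) *
        (Complex.cos (R * T) + Complex.sin (R * T) * Complex.I) := by
      rw [← Complex.exp_mul_I, ← Complex.exp_add]; congr 1; simp only [A]; push_cast; ring
    have hB : Complex.exp (B * T) = Complex.exp (Complex.I * ((s * T / 2 : ℝ) : ℂ)) *
        (Complex.cos (R * T) - Complex.sin (R * T) * Complex.I) := by
      have : Complex.cos (R * T) - Complex.sin (R * T) * Complex.I = Complex.exp (-(R * T) * Complex.I) := by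
        rw [Complex.exp_mul_I]; simp [sub_eq_add_neg]
      rw [this, ← Complex.exp_add]; congr 1; simp only [B]; push_cast; ring
    simp only [hA, hB, w, z]
    generalize Complex.exp (Complex.I * ((s * T / 2 : ℝ) : ℂ)) = E
    push_cast
    match_scalars
    · ring
    · linear_combination (-E * Complex.sin (R * T)) * Complex.I_sq

theorem aux_theta (s ρ α : ℝ) (hs : 0 ≤ s) (hs2 : s < 2) (h0 : 0 ≤ ρ) (h1 : ρ < 1) :
    ∃ R k x θ : ℝ, 0 < R ∧ k ^ 2 ≤ 1 ∧ R ^ 2 + s * R * k + s ^ 2 / 4 = 1 ∧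
      0 < Real.sin x ∧ Real.cos x = ρ * Real.cos θ ∧ k * Real.sin x = ρ * Real.sin θ ∧
      ∃ m : ℤ, θ + s * (x / R) / 2 = α + m * (2 * π) := by
  let S : ℝ → ℝ := fun θ => Real.sqrt (1 - (ρ * Real.cos θ) ^ 2)
  let K : ℝ → ℝ := fun θ => ρ * Real.sin θ / S θ
  let RR : ℝ → ℝ := fun θ => -(s * K θ) / 2 + Real.sqrt ((s * K θ / 2) ^ 2 + (1 - s ^ 2 / 4))
  let X : ℝ → ℝ := fun θ => Real.arccos (ρ * Real.cos θ)
  let f : ℝ → ℝ := fun θ => θ + s * (X θ / RR θ) / 2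
  have hin : ∀ θ, (ρ * Real.cos θ) ^ 2 < 1 := by
    intro θ
    have := Real.cos_sq_le_one θ
    nlinarith [mul_nonneg (sq_nonneg ρ) (sub_nonneg.2 this)]
  have hS : ∀ θ, 0 < S θ := fun θ => Real.sqrt_pos.2 (by linarith [hin θ])
  have hpos : 0 < 1 - s ^ 2 / 4 := by nlinarith
  have hRR : ∀ θ, 0 < RR θ := by
    intro θ
    have : |s * K θ / 2| < Real.sqrt ((s * K θ / 2) ^ 2 + (1 - s ^ 2 / 4)) := by
      apply Real.lt_sqrt_of_sq_lt; rw [sq_abs]; linarith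
    have h2 := le_abs_self (s * K θ / 2)
    simp only [RR]; linarith
  have cS : Continuous S := by simp only [S]; fun_prop
  have cK : Continuous K := Continuous.div (by fun_prop) cS (fun θ => (hS θ).ne')
  have cR : Continuous RR := by simp only [RR]; fun_prop
  have cX : Continuous X := Real.continuous_arccos.comp (by fun_prop)
  have cf : Continuous f := by
    have := Continuous.div cX cR (fun θ => (hRR θ).ne')
    exact continuous_id.add ((continuous_const.mul this).div_const 2)
  have hper : f (2 * π) = f 0 + 2 * π := by
    simp [f, X, RR, K, S, Real.cos_two_pi, Real.sin_two_pi]; ring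
  obtain ⟨m, hm, -⟩ := existsUnique_add_zsmul_mem_Ico Real.two_pi_pos α (f 0)
  have hm' : α + m * (2 * π) ∈ Set.Icc (f 0) (f (2 * π)) := by
    rw [hper]; rw [zsmul_eq_mul] at hm; exact ⟨hm.1, hm.2.le⟩
  obtain ⟨θ, -, hθ⟩ := intermediate_value_Icc Real.two_pi_pos.le cf.continuousOn hm'
  have hab := abs_lt.1 ((sq_lt_one_iff_abs_lt_one _).1 (hin θ))
  have hsx : Real.sin (X θ) = S θ := Real.sin_arccos _
  have hSs : S θ ^ 2 = 1 - (ρ * Real.cos θ) ^ 2 := Real.sq_sqrt (by linarith [hin θ])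
  have hKS : K θ * S θ = ρ * Real.sin θ := div_mul_cancel₀ _ (hS θ).ne'
  refine ⟨RR θ, K θ, X θ, θ, hRR θ, ?_, ?_, ?_, Real.cos_arccos hab.1.le hab.2.le, ?_, m, hθ⟩
  · have : K θ ^ 2 * S θ ^ 2 ≤ 1 * S θ ^ 2 := by
      rw [← mul_pow, hKS, hSs]
      have h2 := Real.sin_sq_add_cos_sq θ
      have h3 : ρ ^ 2 ≤ 1 := by nlinarith
      have h4 : (ρ * Real.sin θ) ^ 2 + (ρ * Real.cos θ) ^ 2 = ρ ^ 2 := by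
        linear_combination ρ ^ 2 * h2
      linarith
    exact le_of_mul_le_mul_right this (by have := hS θ; positivity)
  · have := Real.sq_sqrt (show 0 ≤ (s * K θ / 2) ^ 2 + (1 - s ^ 2 / 4) by positivity)
    simp only [RR]
    linear_combination this
  · rw [hsx]; exact hS θ
  · rw [hsx, hKS]

theorem stmt_5 {n : ℕ} (s : ℝ) (hs : 0 ≤ s) (hs2 : s < 2)
    (q₀ q₁ : EuclideanSpace ℂ (Fin (n + 1)))
    (hq₀ : ‖q₀‖ = 1) (hq₁ : ‖q₁‖ = 1) :
    ∃ ψ ∈ Set.Icc (0 : ℝ) π, ∃ γ : ℝ → EuclideanSpace ℂ (Fin (n + 1)),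
      IsMagGeo s ψ γ ∧ ∃ t₀ t₁ : ℝ, γ t₀ = q₀ ∧ γ t₁ = q₁ := by
  set a : ℂ := inner ℂ q₀ q₁ with ha
  set r : EuclideanSpace ℂ (Fin (n + 1)) := q₁ - a • q₀ with hr
  have hqq : inner ℂ q₀ q₀ = (1 : ℂ) := by
    rw [inner_self_eq_norm_sq_to_K, hq₀]; simp
  have hqr : inner ℂ q₀ r = (0 : ℂ) := by
    rw [hr, inner_sub_right, inner_smul_right, hqq, ← ha]; simp
  have hq1 : q₁ = a • q₀ + r := by rw [hr]; abel
  have hnr : ‖r‖ ^ 2 = 1 - ‖a‖ ^ 2 := by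
    have : ‖q₁‖ ^ 2 = ‖a‖ ^ 2 + ‖r‖ ^ 2 := by
      rw [hq1, @norm_add_sq ℂ, inner_smul_left, hqr, norm_smul, hq₀]
      simp
    rw [hq₁] at this; linarith
  have hpolar : a = ‖a‖ * Complex.exp (Complex.I * (Complex.arg a : ℂ)) := by
    rw [mul_comm Complex.I]; exact (Complex.norm_mul_exp_arg_mul_I a).symm
  have hle : ‖a‖ ≤ 1 := by nlinarith [sq_nonneg ‖r‖, norm_nonneg a]
  rcases hle.lt_or_eq with hlt | heq
  · obtain ⟨R, k, x, θ, hR, hk, hRk, hsx, hcx, hkx, m, hm⟩ :=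
      aux_theta s ‖a‖ (Complex.arg a) hs hs2 (norm_nonneg a) hlt
    set E : ℂ := Complex.exp (Complex.I * ((s * (x / R) / 2 : ℝ) : ℂ)) with hE
    have hEn : ‖E‖ = 1 := by rw [hE, mul_comm]; exact Complex.norm_exp_ofReal_mul_I _
    have hE0 : E ≠ 0 := Complex.exp_ne_zero _
    obtain ⟨ψ, hψ, γ, hγ, g0, gT⟩ := aux_curve_s5 s R k hk hRk q₀
      ((E⁻¹ * ((Real.sin x : ℝ) : ℂ)⁻¹) • r) hq₀ (by rw [inner_smul_right, hqr, mul_zero])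
      (by
        rw [norm_smul, norm_mul, norm_inv, norm_inv, hEn, Complex.norm_real, Real.norm_eq_abs,
          abs_of_pos hsx, mul_pow, hnr]
        have : 1 - ‖a‖ ^ 2 = Real.sin x ^ 2 * (1 - k ^ 2) := by
          have h1 := Real.sin_sq_add_cos_sq x
          have h2 := Real.sin_sq_add_cos_sq θ
          have h3 : (k * Real.sin x) ^ 2 = (‖a‖ * Real.sin θ) ^ 2 := by rw [hkx]
          rw [hcx] at h1
          linear_combination -h1 + ‖a‖ ^ 2 * h2 + h3
        rw [this]; field_simp) (x / R)
    refine ⟨ψ, hψ, γ, hγ, 0, x / R, g0, ?_⟩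
    have hx : R * (x / R) = x := by field_simp
    rw [gT, hx, ← hE, smul_add, smul_smul, smul_smul, smul_smul]
    have hsC : ((Real.sin x : ℝ) : ℂ) ≠ 0 := by exact_mod_cast hsx.ne'
    have e2 : E * ((Real.sin x : ℝ) : ℂ) * (E⁻¹ * ((Real.sin x : ℝ) : ℂ)⁻¹) = 1 := by
      field_simp
    have e1 : E * (((Real.cos x : ℝ) : ℂ) + Complex.I * k * (Real.sin x : ℝ)) = a := by
      have hkC : (k : ℂ) * (Real.sin x : ℝ) = ‖a‖ * (Real.sin θ : ℝ) := by exact_mod_cast hkx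
      have hw : ((Real.cos x : ℝ) : ℂ) + Complex.I * k * (Real.sin x : ℝ)
          = ‖a‖ * Complex.exp (Complex.I * θ) := by
        rw [mul_assoc, hkC, hcx, mul_comm Complex.I (θ : ℂ), Complex.exp_mul_I]
        push_cast; ring
      rw [hw, mul_left_comm, hE, ← Complex.exp_add]
      conv_rhs => rw [hpolar]
      congr 1
      rw [Complex.exp_eq_exp_iff_exists_int]
      refine ⟨m, ?_⟩
      have hmC : (θ : ℂ) + ((s * (x / R) / 2 : ℝ) : ℂ) = Complex.arg a + m * (2 * π) := by
        exact_mod_cast hm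
      linear_combination Complex.I * hmC
    rw [e1, e2, one_smul, ← hq1]
  · have hr0 : r = 0 := by
      rw [heq] at hnr; simpa using hnr
    obtain ⟨ψ, hψ, γ, hγ, g0, gT⟩ := aux_curve_s5 s (1 - s / 2) 1 (by norm_num) (by ring) q₀ 0 hq₀
      (by simp) (by simp) (Complex.arg a)
    refine ⟨ψ, hψ, γ, hγ, 0, Complex.arg a, g0, ?_⟩
    rw [gT, hq1, hr0, smul_zero, add_zero, add_zero, smul_smul]
    congr 1
    conv_rhs => rw [hpolar, heq]
    have : ((Real.cos ((1 - s / 2) * Complex.arg a) : ℝ) : ℂ) + Complex.I * (1 : ℝ) *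
        (Real.sin ((1 - s / 2) * Complex.arg a) : ℝ) =
        Complex.exp ((((1 - s / 2) * Complex.arg a : ℝ) : ℂ) * Complex.I) := by
      rw [Complex.exp_mul_I]; push_cast; ring
    rw [this, ← Complex.exp_add, Complex.ofReal_one, one_mul]
    congr 1
    push_cast; ring
end
end

section
/- Let n ≥ 0 and s = 2, and let q₀, q₁ be points on the unit sphere S^{2n+1} ⊂ ℂ^{n+1}. Then q₀ and q₁ are connected by a unit-speed magnetic geodesic of strength 2 (i.e. there exist ψ ∈ [0,π], a unit-speed magnetic geodesic γ of strength 2 with contact angle ψ, and t₀, t₁ ∈ ℝ with γ(t₀) = q₀, γ(t₁) = q₁) if and only if ⟨q₀, q₁⟩ ≠ 0. (Strength s = 2 corresponds to the Mañé critical energy k = 1/8 of the magnetic system (S^{2n+1}, g, dα).) -/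
noncomputable section

open scoped Real

lemma aux_fwd {E : Type*} [NormedAddCommGroup E] [InnerProductSpace ℂ E]
    (c : ℝ) (γ v : ℝ → E) (h1 : ∀ t : ℝ, HasDerivAt γ (v t) t)
    (h2 : ∀ t : ℝ, HasDerivAt v ((2 * Complex.I) • v t - ((1:ℂ) - 2 * (c:ℂ)) • γ t) t)
    (ω : ℝ) (hω : ω ^ 2 = 2 - 2 * c) (t : ℝ) :
    Complex.exp (-(Complex.I * t)) • (v t - Complex.I • γ t) =
        ((Real.cos (ω * t) : ℝ) : ℂ) • (v 0 - Complex.I • γ 0)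
          - ((ω * Real.sin (ω * t) : ℝ) : ℂ) • γ 0 ∧
    (ω : ℂ) • (Complex.exp (-(Complex.I * t)) • γ t) =
        ((ω * Real.cos (ω * t) : ℝ) : ℂ) • γ 0
          + ((Real.sin (ω * t) : ℝ) : ℂ) • (v 0 - Complex.I • γ 0) := by
  have hω' : (ω : ℂ) ^ 2 = 2 - 2 * (c:ℂ) := by exact_mod_cast hω
  have hc : (c : ℂ) = (2 - (ω:ℂ)^2) / 2 := by rw [hω']; ring
  have hE : ∀ t : ℝ, HasDerivAt (fun t : ℝ => Complex.exp (-(Complex.I * t)))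
      (-Complex.I * Complex.exp (-(Complex.I * t))) t := by
    intro t
    have := (((hasDerivAt_id' t).ofReal_comp.const_mul Complex.I).fun_neg).cexp
    convert this using 1
    simp; ring
  have hC : ∀ t : ℝ, HasDerivAt (fun t : ℝ => ((Real.cos (ω * t) : ℝ) : ℂ))
      (((-(ω * Real.sin (ω * t)) : ℝ) : ℂ)) t := by
    intro t
    have := (((hasDerivAt_id' t).const_mul ω).cos).ofReal_comp
    convert this using 1
    simp; ring
  have hS : ∀ t : ℝ, HasDerivAt (fun t : ℝ => ((Real.sin (ω * t) : ℝ) : ℂ))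
      (((ω * Real.cos (ω * t) : ℝ) : ℂ)) t := by
    intro t
    have := (((hasDerivAt_id' t).const_mul ω).sin).ofReal_comp
    convert this using 1
    simp; ring
  have II : Complex.I ^ 2 = -1 := Complex.I_sq
  have hβ : ∀ t : ℝ, HasDerivAt (fun t : ℝ => Complex.exp (-(Complex.I * t)) • γ t)
      (Complex.exp (-(Complex.I * t)) • (v t - Complex.I • γ t)) t := by
    intro t
    convert (hE t).fun_smul (h1 t) using 1
    module
  have hβ' : ∀ t : ℝ, HasDerivAt
      (fun t : ℝ => Complex.exp (-(Complex.I * t)) • (v t - Complex.I • γ t))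
      (-((ω : ℂ)^2 • (Complex.exp (-(Complex.I * t)) • γ t))) t := by
    intro t
    convert (hE t).fun_smul ((h2 t).fun_sub ((h1 t).fun_const_smul Complex.I)) using 1
    rw [hc]
    match_scalars
    · linear_combination (-Complex.exp (-(Complex.I * t))) * II
    · ring
  have hA : ∀ t : ℝ, HasDerivAt (fun t : ℝ =>
      ((Real.cos (ω * t) : ℝ) : ℂ) • ((ω:ℂ) • (Complex.exp (-(Complex.I * t)) • γ t))
      - ((Real.sin (ω * t) : ℝ) : ℂ) •
        (Complex.exp (-(Complex.I * t)) • (v t - Complex.I • γ t))) 0 t := by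
    intro t
    convert ((hC t).fun_smul ((hβ t).fun_const_smul (ω:ℂ))).fun_sub ((hS t).fun_smul (hβ' t)) using 1
    push_cast
    module
  have hB : ∀ t : ℝ, HasDerivAt (fun t : ℝ =>
      ((Real.sin (ω * t) : ℝ) : ℂ) • ((ω:ℂ) • (Complex.exp (-(Complex.I * t)) • γ t))
      + ((Real.cos (ω * t) : ℝ) : ℂ) •
        (Complex.exp (-(Complex.I * t)) • (v t - Complex.I • γ t))) 0 t := by
    intro t
    convert ((hS t).fun_smul ((hβ t).fun_const_smul (ω:ℂ))).fun_add ((hC t).fun_smul (hβ' t)) using 1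
    push_cast
    module
  have kA := is_const_of_deriv_eq_zero (fun t => (hA t).differentiableAt)
    (fun t => (hA t).deriv) t 0
  have kB := is_const_of_deriv_eq_zero (fun t => (hB t).differentiableAt)
    (fun t => (hB t).deriv) t 0
  simp only [mul_zero, Real.cos_zero, Real.sin_zero, Complex.ofReal_zero, Complex.ofReal_one,
    one_smul, zero_smul, neg_zero, Complex.exp_zero, sub_zero, zero_add] at kA kB
  have hcs : ((Real.cos (ω * t) : ℝ) : ℂ)^2 + ((Real.sin (ω * t) : ℝ) : ℂ)^2 = 1 := by
    exact_mod_cast Real.cos_sq_add_sin_sq (ω * t)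
  rw [← kB, Complex.ofReal_mul, Complex.ofReal_mul,
    mul_comm (ω:ℂ), mul_comm (ω:ℂ), mul_smul _ (ω:ℂ), mul_smul _ (ω:ℂ), ← kA]
  set C := ((Real.cos (ω * t) : ℝ) : ℂ)
  set S := ((Real.sin (ω * t) : ℝ) : ℂ)
  generalize Complex.exp (-(Complex.I * t)) • (v t - Complex.I • γ t) = X
  generalize (ω:ℂ) • Complex.exp (-(Complex.I * t)) • γ t = Y
  constructor
  · match_scalars
    · linear_combination -hcs
    · ring
  · match_scalars
    · linear_combination -hcs
    · ring

lemma aux_exp_conj (t : ℝ) : (starRingEnd ℂ) (Complex.exp (-(Complex.I * t))) *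
    Complex.exp (-(Complex.I * t)) = 1 := by
  rw [← Complex.exp_conj, ← Complex.exp_add]
  simp

lemma aux_deriv_s6 {E : Type*} [NormedAddCommGroup E] [NormedSpace ℂ E] (ω : ℝ) (x y : E) (t : ℝ) :
    HasDerivAt (fun t : ℝ => Complex.exp (Complex.I * t) •
      (((Real.cos (ω * t) : ℝ) : ℂ) • x + ((Real.sin (ω * t) : ℝ) : ℂ) • y))
      (Complex.exp (Complex.I * t) •
      (((Real.cos (ω * t) : ℝ) : ℂ) • (Complex.I • x + (ω:ℂ) • y)
        + ((Real.sin (ω * t) : ℝ) : ℂ) • (Complex.I • y - (ω:ℂ) • x))) t := by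
  have hE : ∀ t : ℝ, HasDerivAt (fun t : ℝ => Complex.exp (Complex.I * t))
      (Complex.I * Complex.exp (Complex.I * t)) t := by
    intro t
    have := (((hasDerivAt_id' t).ofReal_comp.const_mul Complex.I)).cexp
    convert this using 1
    simp; ring
  have hC : ∀ t : ℝ, HasDerivAt (fun t : ℝ => ((Real.cos (ω * t) : ℝ) : ℂ))
      (-(ω * ((Real.sin (ω * t) : ℝ) : ℂ))) t := by
    intro t
    have := (((hasDerivAt_id' t).const_mul ω).cos).ofReal_comp
    convert this using 1
    simp; ring
  have hS : ∀ t : ℝ, HasDerivAt (fun t : ℝ => ((Real.sin (ω * t) : ℝ) : ℂ))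
      (ω * ((Real.cos (ω * t) : ℝ) : ℂ)) t := by
    intro t
    have := (((hasDerivAt_id' t).const_mul ω).sin).ofReal_comp
    convert this using 1
    simp; ring
  have := (hE t).fun_smul (((hC t).smul_const x).fun_add ((hS t).smul_const y))
  convert this using 1
  module

lemma aux_fwd0 {E : Type*} [NormedAddCommGroup E] [NormedSpace ℂ E]
    (γ v : ℝ → E) (h1 : ∀ t, HasDerivAt γ (v t) t) (h : ∀ t, v t = Complex.I • γ t) (t : ℝ) :
    Complex.exp (-(Complex.I * t)) • γ t = γ 0 := by
  have hE : ∀ t : ℝ, HasDerivAt (fun t : ℝ => Complex.exp (-(Complex.I * t)))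
      (-Complex.I * Complex.exp (-(Complex.I * t))) t := by
    intro t
    have := (((hasDerivAt_id' t).ofReal_comp.const_mul Complex.I).fun_neg).cexp
    convert this using 1
    simp; ring
  have hβ : ∀ t : ℝ, HasDerivAt (fun t : ℝ => Complex.exp (-(Complex.I * t)) • γ t) 0 t := by
    intro t
    convert (hE t).fun_smul (h1 t) using 1
    rw [h]
    module
  simpa using is_const_of_deriv_eq_zero (fun t => (hβ t).differentiableAt)
    (fun t => (hβ t).deriv) t 0

lemma aux_bwd {n : ℕ} (q u : EuclideanSpace ℂ (Fin (n + 1))) (ψ ω : ℝ)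
    (hω : ω ^ 2 = 2 - 2 * Real.cos ψ) (hq : ‖q‖ = 1)
    (hu : (ω:ℂ) ^ 2 * inner ℂ u u = (ω:ℂ) ^ 2)
    (hqu : (ω:ℂ) * inner ℂ u q = Complex.I * (ω:ℂ)^2 / 2) :
    IsMagGeo 2 ψ (fun t : ℝ => Complex.exp (Complex.I * t) •
      (((Real.cos (ω * t) : ℝ) : ℂ) • q + ((Real.sin (ω * t) : ℝ) : ℂ) • u)) := by
  have hω' : (ω : ℂ) ^ 2 = 2 - 2 * (Real.cos ψ:ℂ) := by exact_mod_cast hω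
  have II : Complex.I ^ 2 = -1 := Complex.I_sq
  have hγ := aux_deriv_s6 (E := EuclideanSpace ℂ (Fin (n + 1))) ω
  have d1 := funext fun t => (hγ q u t).deriv
  have hqq : inner ℂ q q = 1 := by
    rw [inner_self_eq_norm_sq_to_K, hq]; simp
  have hqu' : (ω:ℂ) * inner ℂ q u = -Complex.I * (ω:ℂ)^2 / 2 := by
    have := congrArg (starRingEnd ℂ) hqu
    simpa [inner_conj_symm, map_ofNat] using this
  refine ⟨?_, ?_, ?_, ?_, ?_, ?_⟩
  · have e1 : ContDiff ℝ (⊤ : ℕ∞) (fun t : ℝ => Complex.exp (Complex.I * t)) :=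
      (contDiff_const.mul Complex.ofRealCLM.contDiff).cexp
    have e2 : ContDiff ℝ (⊤ : ℕ∞) (fun t : ℝ => ((Real.cos (ω * t) : ℝ) : ℂ)) :=
      Complex.ofRealCLM.contDiff.comp (contDiff_const.mul contDiff_id).cos
    have e3 : ContDiff ℝ (⊤ : ℕ∞) (fun t : ℝ => ((Real.sin (ω * t) : ℝ) : ℂ)) :=
      Complex.ofRealCLM.contDiff.comp (contDiff_const.mul contDiff_id).sin
    exact e1.smul ((e2.smul contDiff_const).add (e3.smul contDiff_const))
  · intro t
    have hc : (Real.cos ψ : ℂ) = (2 - (ω:ℂ)^2) / 2 := by rw [hω']; ring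
    rw [d1, (hγ _ _ t).deriv, hc]
    push_cast
    match_scalars <;> ring_nf <;> rw [II] <;> ring
  · simpa using hq
  · rw [d1]
    have : inner ℂ (Complex.I • q + (ω:ℂ) • u) (Complex.I • q + (ω:ℂ) • u) = (1:ℂ) := by
      simp only [inner_add_left, inner_add_right, inner_smul_left, inner_smul_right,
        Complex.conj_I, Complex.conj_ofReal]
      linear_combination (-Complex.I^2) * hqq + hu + Complex.I * hqu - Complex.I * hqu' + (-1+(ω:ℂ)^2) * II
    rw [inner_self_eq_norm_sq_to_K] at this
    have h' : ‖Complex.I • q + (ω:ℂ) • u‖ ^ 2 = 1 := Complex.ofReal_injective (by simpa using this)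
    have := (pow_eq_one_iff_of_nonneg (norm_nonneg _) two_ne_zero).1 h'
    simpa using this
  · rw [d1]
    have : inner ℂ (Complex.I • q + (ω:ℂ) • u) q = -Complex.I + Complex.I * ((ω^2/2 : ℝ):ℂ) := by
      simp only [inner_add_left, inner_smul_left, Complex.conj_I, Complex.conj_ofReal]
      push_cast
      linear_combination (-Complex.I) * hqq + hqu
    simp only [herm, mul_zero, Real.cos_zero, Real.sin_zero, Complex.ofReal_zero, Complex.ofReal_one,
      one_smul, zero_smul, Complex.exp_zero, add_zero]
    rw [this, Complex.add_re, Complex.mul_re, Complex.ofReal_re, Complex.ofReal_im]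
    simp
  · rw [d1]
    have : inner ℂ (Complex.I • q + (ω:ℂ) • u) (Complex.I • q) = ((1 - ω^2/2 : ℝ):ℂ) := by
      simp only [inner_add_left, inner_smul_left, inner_smul_right, Complex.conj_I, Complex.conj_ofReal]
      push_cast
      linear_combination (-Complex.I^2) * hqq + Complex.I * hqu + (-1 + (ω:ℂ)^2/2) * II
    simp only [herm, mul_zero, Real.cos_zero, Real.sin_zero, Complex.ofReal_zero, Complex.ofReal_one,
      one_smul, zero_smul, Complex.exp_zero, add_zero]
    rw [this, Complex.ofReal_re]
    linarith

/-- solving for the parameters -/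
lemma aux_param (r φ : ℝ) (hr : 0 < r) (hr1 : r < 1) :
    ∃ a x t : ℝ, 0 < a ∧ a ≤ 1 ∧ 0 < Real.sin (2 * a * t) ∧
      Real.cos (2 * a * t) = r * Real.cos x ∧ a * Real.sin (2 * a * t) = r * Real.sin x ∧
      ∃ N : ℕ, x - t = φ - 2 * π * N := by
  obtain ⟨N, hN⟩ := exists_nat_gt ((π / 2 / (2 * r) - π / 2 + φ) / (2 * π))
  have hpi := Real.pi_pos
  rw [div_lt_iff₀ (by positivity)] at hN
  have hN2 : π / 2 / (2 * r) < π / 2 - φ + 2 * π * N := by linarith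
  rw [div_lt_iff₀ (by positivity)] at hN2
  set h : ℝ → ℝ := fun x => 2 * r * Real.sin x * (x - φ + 2 * π * N)
    - Real.arccos (r * Real.cos x) * Real.sqrt (1 - (r * Real.cos x)^2) with hh
  have hcont : Continuous h := by
    have := Real.continuous_arccos
    fun_prop
  have h0 : h 0 < 0 := by
    have e1 : 0 < Real.arccos r := Real.arccos_pos.2 hr1
    have e2 : 0 < Real.sqrt (1 - r^2) := Real.sqrt_pos.2 (by nlinarith)
    simp only [hh, Real.sin_zero, Real.cos_zero, mul_one, mul_zero, zero_mul]
    nlinarith [mul_pos e1 e2]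
  have h1 : 0 ≤ h (π / 2) := by
    simp [hh]
    nlinarith
  obtain ⟨x, ⟨hx0, hx1⟩, hx⟩ := intermediate_value_Icc (by positivity : (0:ℝ) ≤ π / 2)
    hcont.continuousOn ⟨h0.le, h1⟩
  have hx0' : 0 < x := lt_of_le_of_ne hx0 (by rintro rfl; linarith)
  have hsx : 0 < Real.sin x := Real.sin_pos_of_pos_of_lt_pi hx0' (by linarith)
  have hcx := Real.cos_le_one x
  have hcx0 : 0 ≤ Real.cos x := Real.cos_nonneg_of_mem_Icc ⟨by linarith, hx1⟩
  have hy0 : 0 ≤ r * Real.cos x := by positivity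
  have hy1 : r * Real.cos x < 1 := by nlinarith
  have hyp : 0 < 1 - (r * Real.cos x)^2 := by nlinarith
  set S := Real.sqrt (1 - (r * Real.cos x)^2) with hS
  have hSpos : 0 < S := Real.sqrt_pos.2 hyp
  have hSS : S ^ 2 = 1 - (r * Real.cos x)^2 := Real.sq_sqrt hyp.le
  have hxx : 2 * r * Real.sin x * (x - φ + 2 * π * N) = Real.arccos (r * Real.cos x) * S := by
    simp only [hh] at hx; linarith
  have key : 2 * (r * Real.sin x / S) * (x - φ + 2 * π * N) = Real.arccos (r * Real.cos x) := by
    field_simp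
    linarith
  have hsin : Real.sin (Real.arccos (r * Real.cos x)) = S := Real.sin_arccos _
  refine ⟨r * Real.sin x / S, x, x - φ + 2 * π * N, by positivity, ?_, ?_, ?_, ?_, N, by ring⟩
  · rw [div_le_one hSpos]
    refine abs_le_of_sq_le_sq' ?_ hSpos.le |>.2
    have := Real.sin_sq_add_cos_sq x
    have e : (r * Real.sin x)^2 = r^2 - (r * Real.cos x)^2 := by
      rw [mul_pow, mul_pow]; linear_combination r^2 * this
    rw [e, hSS]
    nlinarith
  · rw [key, hsin]; exact hSpos
  · rw [key, Real.cos_arccos (by linarith) hy1.le]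
  · rw [key, hsin]; field_simp

lemma aux_mp {n : ℕ}
    (q₀ q₁ : EuclideanSpace ℂ (Fin (n + 1))) (hq₀ : ‖q₀‖ = 1) (ψ : ℝ)
    (γ : ℝ → EuclideanSpace ℂ (Fin (n + 1))) (h : IsMagGeo 2 ψ γ) (t₀ t₁ : ℝ)
    (h0 : γ t₀ = q₀) (h1 : γ t₁ = q₁) : herm q₀ q₁ ≠ 0 := by
  obtain ⟨hs, ode, n0, n1, hre, him⟩ := h
  set c := Real.cos ψ with hc
  have II : Complex.I ^ 2 = -1 := Complex.I_sq
  have d1 : ∀ t, HasDerivAt γ (deriv γ t) t := fun t =>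
    (hs.differentiable (by simp) t).hasDerivAt
  have hs' : ContDiff ℝ 1 (deriv γ) := by
    have : ContDiff ℝ (1 + 1) γ := contDiff_infty.1 hs 2
    exact (contDiff_succ_iff_deriv.1 this).2.2
  have d2 : ∀ t, HasDerivAt (deriv γ)
      ((2 * Complex.I) • deriv γ t - ((1:ℂ) - 2 * (c:ℂ)) • γ t) t := by
    intro t
    have e := (hs'.differentiable (by simp) t).hasDerivAt
    have o := ode t
    push_cast at o
    have : deriv (deriv γ) t = (2 * Complex.I) • deriv γ t - ((1:ℂ) - 2 * (c:ℂ)) • γ t := by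
      rw [← sub_eq_zero, ← o]; abel
    rwa [this] at e
  generalize deriv γ = v at *
  have hvg : inner ℂ (v 0) (γ 0) = -(Complex.I * (c:ℂ)) := by
    simp only [herm, inner_smul_right] at hre him
    apply Complex.ext
    · simp [hre]
    · simp at him ⊢; linarith
  have hgv : inner ℂ (γ 0) (v 0) = (Complex.I * (c:ℂ)) := by
    rw [← inner_conj_symm, hvg]; simp
  have hgg : inner ℂ (γ 0) (γ 0) = (1:ℂ) := by
    rw [inner_self_eq_norm_sq_to_K, n0]; simp
  have hvv : inner ℂ (v 0) (v 0) = (1:ℂ) := by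
    rw [inner_self_eq_norm_sq_to_K, n1]; simp
  have hc1 : c ≤ 1 := Real.cos_le_one ψ
  obtain ⟨ω, hω0, hω⟩ : ∃ ω : ℝ, 0 ≤ ω ∧ ω ^ 2 = 2 - 2 * c :=
    ⟨Real.sqrt (2 - 2 * c), Real.sqrt_nonneg _, Real.sq_sqrt (by linarith)⟩
  have hω' : (ω : ℂ) ^ 2 = 2 - 2 * (c:ℂ) := by exact_mod_cast hω
  have F := aux_fwd c γ v d1 d2 ω hω
  generalize hb : v 0 - Complex.I • γ 0 = b at F
  have hbb : inner ℂ b b = (ω:ℂ)^2 := by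
    rw [← hb]
    simp only [inner_sub_left, inner_sub_right, inner_smul_left, inner_smul_right, Complex.conj_I,
      hvg, hgv, hgg, hvv]
    rw [hω']
    linear_combination (2 * (c:ℂ) - 1) * II
  have hbg : inner ℂ b (γ 0) = Complex.I * (ω:ℂ)^2 / 2 := by
    rw [← hb]
    simp only [inner_sub_left, inner_smul_left, Complex.conj_I, hvg, hgg]
    rw [hω']
    ring
  have hgb : inner ℂ (γ 0) b = -(Complex.I * (ω:ℂ)^2 / 2) := by
    rw [← hb]
    simp only [inner_sub_right, inner_smul_right, hgv, hgg]
    rw [hω']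
    ring
  intro hz
  simp only [herm] at hz
  rcases hω0.eq_or_lt with h | hpos
  · subst h
    have hb0 : b = 0 := by
      rw [← inner_self_eq_zero (𝕜 := ℂ), hbb]; simp
    have hv : ∀ t, v t = Complex.I • γ t := by
      intro t
      have := (F t).1
      simpa [hb0, sub_eq_zero] using this
    have G := aux_fwd0 γ v d1 hv
    have g0 := G t₀
    have g1 := G t₁
    rw [h0] at g0
    rw [h1] at g1
    have : inner ℂ (γ 0) (γ 0) = (0:ℂ) := by
      conv_lhs => rw [← g0]
      rw [g0]
      conv_lhs => 
        arg 2
        rw [← g1]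
      rw [← g0, inner_smul_left, inner_smul_right, hz]; simp
    rw [hgg] at this
    exact one_ne_zero this
  · have P0 := (F t₀).2
    have P1 := (F t₁).2
    rw [h0] at P0
    rw [h1] at P1
    have K : inner ℂ ((ω : ℂ) • Complex.exp (-(Complex.I * t₁)) • q₁)
        ((ω : ℂ) • Complex.exp (-(Complex.I * t₀)) • q₀) = (0:ℂ) := by
      simp [inner_smul_left, inner_smul_right, hz]
    rw [P0, P1] at K
    simp only [inner_add_left, inner_add_right, inner_smul_left, inner_smul_right,
      Complex.conj_ofReal, hgg, hbb, hbg, hgb] at K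
    have K' : ((ω^2 * (Real.cos (ω * t₁) * Real.cos (ω * t₀) + Real.sin (ω * t₁) * Real.sin (ω * t₀)) : ℝ) : ℂ)
      + ((ω^3 / 2 * (Real.sin (ω * t₁) * Real.cos (ω * t₀) - Real.cos (ω * t₁) * Real.sin (ω * t₀)) : ℝ) : ℂ) * Complex.I = 0 := by
      rw [← K]
      push_cast
      ring
    rw [← Real.cos_sub, ← Real.sin_sub] at K'
    have r1 := congrArg Complex.re K'
    have r2 := congrArg Complex.im K'
    rw [Complex.add_re, Complex.re_ofReal_mul, Complex.ofReal_re, Complex.I_re, mul_zero, add_zero,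
      Complex.zero_re] at r1
    rw [Complex.add_im, Complex.im_ofReal_mul, Complex.ofReal_im, Complex.I_im, mul_one, zero_add,
      Complex.zero_im] at r2
    have c0 := (mul_eq_zero.1 r1).resolve_left (by positivity)
    have s0 := (mul_eq_zero.1 r2).resolve_left (by positivity)
    have := Real.cos_sq_add_sin_sq (ω * t₁ - ω * t₀)
    rw [c0, s0] at this
    norm_num at this

theorem stmt_6 {n : ℕ}
    (q₀ q₁ : EuclideanSpace ℂ (Fin (n + 1)))
    (hq₀ : ‖q₀‖ = 1) (hq₁ : ‖q₁‖ = 1) :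
    (∃ ψ ∈ Set.Icc (0 : ℝ) π, ∃ γ : ℝ → EuclideanSpace ℂ (Fin (n + 1)),
      IsMagGeo 2 ψ γ ∧ ∃ t₀ t₁ : ℝ, γ t₀ = q₀ ∧ γ t₁ = q₁) ↔ herm q₀ q₁ ≠ 0 := by
  constructor
  · rintro ⟨ψ, -, γ, h, t₀, t₁, h0, h1⟩
    exact aux_mp q₀ q₁ hq₀ ψ γ h t₀ t₁ h0 h1
  intro hz
  simp only [herm] at hz
  have II : Complex.I ^ 2 = -1 := Complex.I_sq
  have h00 : inner ℂ q₀ q₀ = (1:ℂ) := by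
    rw [inner_self_eq_norm_sq_to_K, hq₀]; simp
  have h11 : inner ℂ q₁ q₁ = (1:ℂ) := by
    rw [inner_self_eq_norm_sq_to_K, hq₁]; simp
  have hle : ‖(inner ℂ q₁ q₀ : ℂ)‖ ≤ 1 := by
    simpa [hq₀, hq₁] using norm_inner_le_norm (𝕜 := ℂ) q₁ q₀
  have h01 : (inner ℂ q₀ q₁ : ℂ) = (starRingEnd ℂ) (inner ℂ q₁ q₀) := (inner_conj_symm _ _).symm
  generalize hzz : (inner ℂ q₁ q₀ : ℂ) = z at *
  rcases hle.eq_or_lt with h | hlt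
  · refine ⟨0, ⟨le_rfl, Real.pi_pos.le⟩, _, aux_bwd q₀ 0 0 0 (by simp) hq₀ (by simp) (by simp),
      0, Complex.arg ((starRingEnd ℂ) z), by simp, ?_⟩
    have e : Complex.exp (Complex.I * (Complex.arg ((starRingEnd ℂ) z) : ℝ)) = (starRingEnd ℂ) z := by
      have := Complex.norm_mul_exp_arg_mul_I ((starRingEnd ℂ) z)
      rw [RCLike.norm_conj, h, mul_comm _ Complex.I] at this
      simpa using this
    have hzc : z * (starRingEnd ℂ) z = 1 := by
      rw [Complex.mul_conj, Complex.normSq_eq_norm_sq, h]; simp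
    simp only [e, zero_mul, Real.cos_zero, Real.sin_zero, Complex.ofReal_one, Complex.ofReal_zero,
      one_smul, zero_smul, add_zero]
    symm
    rw [← sub_eq_zero, ← inner_self_eq_zero (𝕜 := ℂ)]
    simp only [inner_sub_left, inner_sub_right, inner_smul_left, inner_smul_right, h00, h11, h01, hzz,
      Complex.conj_conj]
    linear_combination (-1:ℂ) * hzc
  · obtain ⟨a, x, t, ha, ha1, hS, hC, haS, N, hN⟩ := aux_param ‖z‖ (Complex.arg z)
      (norm_pos_iff.2 hz) hlt
    have hw : Complex.exp (Complex.I * t) * z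
        = ((Real.cos (2 * a * t) : ℝ) : ℂ) + Complex.I * (a * ((Real.sin (2 * a * t) : ℝ) : ℂ)) := by
      have e1 : (a : ℂ) * ((Real.sin (2 * a * t) : ℝ) : ℂ) = ‖z‖ * ((Real.sin x : ℝ) : ℂ) := by
        exact_mod_cast haS
      rw [e1, hC]
      conv_lhs => rw [← Complex.norm_mul_exp_arg_mul_I z]
      have e2 : Complex.exp (Complex.I * t) * Complex.exp (Complex.arg z * Complex.I)
          = Complex.exp (x * Complex.I) := by
        have e3 : (Complex.arg z : ℂ) = x - t + 2 * π * N := by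
          have : Complex.arg z = x - t + 2 * π * N := by linarith
          exact_mod_cast this
        rw [e3, ← Complex.exp_add]
        rw [show Complex.I * (t:ℂ) + ((x:ℂ) - t + 2 * π * N) * Complex.I
          = x * Complex.I + N * (2 * π * Complex.I) by ring, Complex.exp_add,
          Complex.exp_nat_mul_two_pi_mul_I, mul_one]
      rw [mul_left_comm, e2, Complex.exp_mul_I]
      push_cast
      ring
    have hEE : Complex.exp (Complex.I * t) * Complex.exp (-(Complex.I * t)) = 1 := by
      rw [← Complex.exp_add]; simp
    have hcE : (starRingEnd ℂ) (Complex.exp (-(Complex.I * t))) = Complex.exp (Complex.I * t) := by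
      rw [← Complex.exp_conj]; simp
    have hw' := congrArg (starRingEnd ℂ) hw
    rw [← hcE] at hw'
    simp only [map_mul, map_add, Complex.conj_conj, Complex.conj_ofReal, Complex.conj_I] at hw'
    have hcs : ((Real.cos (2 * a * t) : ℝ) : ℂ)^2 + ((Real.sin (2 * a * t) : ℝ) : ℂ)^2 = 1 := by
      exact_mod_cast Real.cos_sq_add_sin_sq (2 * a * t)
    have hS0 : ((Real.sin (2 * a * t) : ℝ) : ℂ) ≠ 0 := by exact_mod_cast hS.ne'
    set u := ((Real.sin (2 * a * t) : ℝ) : ℂ)⁻¹ • (Complex.exp (-(Complex.I * t)) • q₁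
      - ((Real.cos (2 * a * t) : ℝ) : ℂ) • q₀) with hu
    have huq : inner ℂ u q₀ = Complex.I * a := by
      rw [hu]
      simp only [inner_sub_left, inner_smul_left, h00, hzz, map_inv₀, Complex.conj_ofReal, hcE]
      rw [hw]
      field_simp
      ring
    have huu : inner ℂ u u = (1:ℂ) := by
      rw [hu]
      simp only [inner_sub_left, inner_sub_right, inner_smul_left, inner_smul_right, h00, h11, h01,
        hzz, map_inv₀, Complex.conj_ofReal, hcE]
      field_simp
      linear_combination hEE - ((Real.cos (2 * a * t) : ℝ) : ℂ) * hw
        - ((Real.cos (2 * a * t) : ℝ) : ℂ) * hw' - hcs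
    refine ⟨Real.arccos (1 - 2 * a^2), ⟨Real.arccos_nonneg _, Real.arccos_le_pi _⟩, _,
      aux_bwd q₀ u _ (2 * a) ?_ hq₀ ?_ ?_, 0, t, by simp, ?_⟩
    · rw [Real.cos_arccos (by nlinarith) (by nlinarith)]; ring
    · rw [huu, mul_one]
    · rw [huq]; push_cast; ring
    · show Complex.exp (Complex.I * t) • (((Real.cos (2 * a * t) : ℝ) : ℂ) • q₀
        + ((Real.sin (2 * a * t) : ℝ) : ℂ) • u) = q₁
      rw [hu, smul_inv_smul₀ hS0, add_sub_cancel, smul_smul, hEE, one_smul]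
end
end

section
/- Let n ≥ 0, s > 2, and let q₀, q₁ be points on the unit sphere S^{2n+1} ⊂ ℂ^{n+1} with |⟨q₀, q₁⟩| > sqrt(1 − 4/s²). Then q₀ and q₁ are connected by a unit-speed magnetic geodesic of strength s: there exist ψ ∈ [0,π], a unit-speed magnetic geodesic γ of strength s with contact angle ψ, and t₀, t₁ ∈ ℝ with γ(t₀) = q₀ and γ(t₁) = q₁. (Unit-speed strength s corresponds to kinetic energy k = 1/(2s²) < 1/8, and sqrt(1 − 4/s²) = sqrt(1 − 8k).) -/
noncomputable section

open scoped Real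

/-- IVT lemma. -/
theorem ivt_aux (A B : ℝ → ℝ) (p q θ : ℝ) (hpq : p ≤ q)
    (hA : ContinuousOn A (Set.Icc p q)) (hB : ContinuousOn B (Set.Icc p q))
    (hlt : B q < B p) : ∃ (k : ℕ) (m : ℤ), ∃ x ∈ Set.Icc p q,
      A x + k * B x = θ + m * (2 * π) := by
  obtain ⟨k, hk⟩ := exists_nat_gt ((2 * π + A q - A p) / (B p - B q))
  have h0 : 0 < B p - B q := by linarith
  rw [div_lt_iff₀ h0] at hk
  have hcont : ContinuousOn (fun x => A x + k * B x) (Set.Icc p q) :=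
    hA.add (continuousOn_const.mul hB)
  have hpi := Real.pi_pos
  have h1 := Int.le_ceil ((A q + k * B q - θ) / (2 * π))
  have h2 := Int.ceil_lt_add_one ((A q + k * B q - θ) / (2 * π))
  set m := ⌈(A q + k * B q - θ) / (2 * π)⌉
  rw [div_le_iff₀ (by positivity)] at h1
  rw [← sub_lt_iff_lt_add, lt_div_iff₀ (by positivity)] at h2
  obtain ⟨x, hx, hx2⟩ := intermediate_value_Icc' hpq hcont
    (show θ + m * (2 * π) ∈ _ from ⟨by linarith, by linarith⟩)
  exact ⟨k, m, x, hx, hx2⟩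

def fF (s ψ t : ℝ) : ℂ := Complex.exp (Complex.I * (s / 2) * t) *
  (Complex.cos (normC s ψ * t) + Complex.I * ((Real.cos ψ - s / 2) / normC s ψ)
    * Complex.sin (normC s ψ * t))

def gF (s ψ t : ℝ) : ℂ := Complex.exp (Complex.I * (s / 2) * t) *
  (Complex.sin (normC s ψ * t) / normC s ψ)

theorem normC_sq (s ψ : ℝ) :
    normC s ψ ^ 2 = (Real.cos ψ - s / 2) ^ 2 + Real.sin ψ ^ 2 := by
  have h := Real.sin_sq_add_cos_sq ψ
  have : s ^ 2 / 4 + 1 - s * Real.cos ψ = (Real.cos ψ - s / 2) ^ 2 + Real.sin ψ ^ 2 := by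
    linear_combination -h
  rw [normC, this, Real.sq_sqrt (by positivity)]

theorem normC_pos (s ψ : ℝ) (hs : 2 < s) : 0 < normC s ψ := by
  have h := Real.cos_le_one ψ
  apply Real.sqrt_pos.2
  nlinarith [Real.neg_one_le_cos ψ]

theorem norm_exp_half (s t : ℝ) : ‖Complex.exp (Complex.I * (s / 2) * t)‖ = 1 := by
  rw [show Complex.I * (s / 2) * t = ((s / 2 * t : ℝ) : ℂ) * Complex.I by push_cast; ring]
  exact Complex.norm_exp_ofReal_mul_I _

theorem normSq_aux (x k : ℝ) : ‖Complex.cos x + Complex.I * k * Complex.sin x‖ ^ 2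
    = Real.cos x ^ 2 + k ^ 2 * Real.sin x ^ 2 := by
  rw [← Complex.normSq_eq_norm_sq, ← Complex.ofReal_cos, ← Complex.ofReal_sin, Complex.normSq_apply]
  simp [-Complex.ofReal_cos, -Complex.ofReal_sin]
  ring

theorem norm_fF_gF (s ψ t : ℝ) (hs : 2 < s) :
    ‖fF s ψ t‖ ^ 2 + Real.sin ψ ^ 2 * ‖gF s ψ t‖ ^ 2 = 1 := by
  have hC := normC_pos s ψ hs
  have hC2 := normC_sq s ψ
  have h1 := normSq_aux (normC s ψ * t) ((Real.cos ψ - s / 2) / normC s ψ)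
  push_cast at h1
  rw [fF, gF, norm_mul, norm_mul, norm_exp_half, one_mul, one_mul]
  push_cast
  rw [h1, norm_div, ← Complex.ofReal_mul, ← Complex.ofReal_sin, Complex.norm_real, Complex.norm_real,
    Real.norm_eq_abs, Real.norm_eq_abs, div_pow |Real.sin _|, sq_abs, sq_abs]
  have h2 := Real.sin_sq_add_cos_sq (normC s ψ * t)
  field_simp
  linear_combination 4 * (normC s ψ ^ 2 * h2 - Real.sin (normC s ψ * t) ^ 2 * hC2)

theorem ofReal_hasDerivAt (t : ℝ) : HasDerivAt (fun t : ℝ => (t : ℂ)) 1 t :=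
  Complex.ofRealCLM.hasDerivAt (x := t)

def eF (s C : ℝ) (a b : ℂ) (t : ℝ) : ℂ := Complex.exp (Complex.I * (s / 2) * t) *
      (a * Complex.cos (C * t) + b * Complex.sin (C * t))

theorem deriv_gen (s C : ℝ) (a b : ℂ) (t : ℝ) :
    HasDerivAt (eF s C a b)
     (eF s C (Complex.I * (s / 2) * a + C * b) (Complex.I * (s / 2) * b - C * a) t) t := by
  unfold eF
  have h0 := ofReal_hasDerivAt t
  have h1 := (h0.const_mul (Complex.I * (s / 2))).cexp
  have h2 := ((((Complex.hasDerivAt_cos _).comp t (h0.const_mul (C : ℂ))).const_mul a).add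
    (((Complex.hasDerivAt_sin _).comp t (h0.const_mul (C : ℂ))).const_mul b))
  refine (h1.mul h2).congr_deriv ?_
  simp only [Pi.add_apply, Function.comp_apply]
  ring

theorem geo {n : ℕ} (s ψ : ℝ) (hs : 2 < s) (q w : EuclideanSpace ℂ (Fin (n + 1)))
    (hq : ‖q‖ = 1) (hw : ‖w‖ ^ 2 = Real.sin ψ ^ 2) (hqw : inner ℂ q w = 0) :
    IsMagGeo s ψ (fun t => fF s ψ t • q + gF s ψ t • w) := by
  have hC := normC_pos s ψ hs
  have hC2 := normC_sq s ψ
  have hsc := Real.sin_sq_add_cos_sq ψ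
  set C := normC s ψ with hCdef
  have hCc : (C : ℂ) ≠ 0 := by exact_mod_cast hC.ne'
  have hCc2 : (C : ℂ) ^ 2 = s ^ 2 / 4 + 1 - s * (Real.cos ψ : ℂ) := by
    have : C ^ 2 = s ^ 2 / 4 + 1 - s * Real.cos ψ := by linear_combination hC2 + hsc
    exact_mod_cast this
  set c : ℂ := (Real.cos ψ : ℂ) with hc
  have hf : fF s ψ = eF s C 1 (Complex.I * ((c - s / 2) / C)) := by
    funext t; simp only [fF, eF, one_mul]; rfl
  have hg : gF s ψ = eF s C 0 (1 / C) := by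
    funext t; simp only [gF, eF]; rw [← hCdef]; ring
  have key : ∀ a b a' b' : ℂ, deriv (fun t => eF s C a b t • q + eF s C a' b' t • w) =
      fun t => eF s C (Complex.I * (s / 2) * a + C * b) (Complex.I * (s / 2) * b - C * a) t • q
      + eF s C (Complex.I * (s / 2) * a' + C * b') (Complex.I * (s / 2) * b' - C * a') t • w := by
    intro a b a' b'
    funext t
    exact (((deriv_gen s C a b t).smul_const q).add ((deriv_gen s C a' b' t).smul_const w)).deriv
  have hd := key 1 (Complex.I * ((c - s / 2) / C)) 0 (1 / C)
  rw [← hf, ← hg] at hd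
  have hd0 : deriv (fun t => fF s ψ t • q + gF s ψ t • w) 0 = (Complex.I * c) • q + w := by
    rw [hd]
    simp [eF]
    congr 1
    · congr 1
      field_simp
      ring
    · rw [mul_inv_cancel₀ hCc, one_smul]
  have h0 : fF s ψ 0 • q + gF s ψ 0 • w = q := by
    rw [hf, hg]; simp [eF]
  have hwq : inner ℂ w q = 0 := by rw [← inner_conj_symm, hqw]; simp
  have hqq : inner ℂ q q = (1 : ℂ) := by rw [inner_self_eq_norm_sq_to_K, hq]; simp
  refine ⟨?_, ?_, ?_, ?_, ?_, ?_⟩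
  · rw [hf, hg]
    have : ContDiff ℝ (⊤ : ℕ∞) (fun t : ℝ => (t : ℂ)) := Complex.ofRealCLM.contDiff
    have hE : ∀ a b : ℂ, ContDiff ℝ (⊤ : ℕ∞) (eF s C a b) := by
      intro a b
      have hcC := (contDiff_const (c := (C : ℂ))).mul this
      refine ((contDiff_const.mul this).cexp).mul ?_
      exact (contDiff_const.mul ((Complex.contDiff_cos.restrict_scalars ℝ).comp hcC)).add
        (contDiff_const.mul ((Complex.contDiff_sin.restrict_scalars ℝ).comp hcC))
    exact ((hE _ _).smul contDiff_const).add ((hE _ _).smul contDiff_const)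
  · intro t
    rw [hd, key, hf, hg]
    simp only [eF, smul_add, smul_smul]
    have hI := Complex.I_sq
    generalize Complex.exp (Complex.I * (s / 2) * t) = e
    generalize Complex.cos (C * t) = x
    generalize Complex.sin (C * t) = y
    rw [show ∀ a b a' b' a'' b'' : ℂ, a • q + b • w - (a' • q + b' • w) + (a'' • q + b'' • w)
      = (a - a' + a'') • q + (b - b' + b'') • w from fun _ _ _ _ _ _ => by module]
    convert add_zero (0 : EuclideanSpace ℂ (Fin (n + 1))) using 2
    · convert zero_smul ℂ q using 2
      generalize Complex.I * ((c - s / 2) / C) = β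
      linear_combination e * (x + β * y) * (-hCc2 - s ^ 2 / 4 * hI)
    · convert zero_smul ℂ w using 2
      generalize (1 / (C : ℂ)) = β
      linear_combination e * (β * y) * (-hCc2 - s ^ 2 / 4 * hI)
  · simp only [h0, hq]
  · rw [hd0]
    have : ‖(Complex.I * c) • q + w‖ ^ 2 = 1 := by
      rw [@norm_add_sq ℂ, norm_smul, inner_smul_left, hqw, hw, hq, hc]
      simp [-Complex.ofReal_cos]
    nlinarith [norm_nonneg ((Complex.I * c) • q + w)]
  · rw [hd0]
    simp only [h0, herm, inner_add_left, inner_smul_left, hwq, hqq, hc]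
    simp [-Complex.ofReal_cos]
  · rw [hd0]
    simp only [h0, herm, inner_add_left, inner_smul_left, inner_smul_right, hwq, hqq, hc]
    simp [-Complex.ofReal_cos]

theorem analytic (s : ℝ) (hs : 2 < s) (a : ℂ) (h1 : 1 - 4 / s ^ 2 < ‖a‖ ^ 2) (h2 : ‖a‖ < 1) :
    ∃ ψ ∈ Set.Icc (0 : ℝ) π, ∃ t : ℝ, fF s ψ t = a := by
  have ha0 : 0 ≤ ‖a‖ := norm_nonneg a
  obtain ⟨r, hr, hr2⟩ : ∃ r : ℝ, 0 < r ∧ r ^ 2 = 1 - ‖a‖ ^ 2 :=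
    ⟨√(1 - ‖a‖ ^ 2), Real.sqrt_pos.2 (by nlinarith), Real.sq_sqrt (by nlinarith)⟩
  have hcC : Continuous (normC s) := by unfold normC; fun_prop
  set ψ0 := Real.arccos (2 / s) with hψ0
  have h2s : 2 / s < 1 := by rw [div_lt_one (by linarith)]; exact hs
  have h2s0 : 0 < 2 / s := by positivity
  have hcos0 : Real.cos ψ0 = 2 / s := Real.cos_arccos (by linarith) h2s.le
  have hψ0pos : 0 < ψ0 := Real.arccos_pos.2 h2s
  have hψ0lt : ψ0 < π := by
    have := Real.arccos_lt_pi_div_two.2 h2s0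
    linarith [Real.pi_pos]
  have hopen : IsOpen {ψ : ℝ | r * normC s ψ < Real.sin ψ} :=
    isOpen_lt (by fun_prop) (by fun_prop)
  have hmem : ψ0 ∈ {ψ : ℝ | r * normC s ψ < Real.sin ψ} := by
    have hs0 := Real.sin_pos_of_pos_of_lt_pi hψ0pos hψ0lt
    apply lt_of_pow_lt_pow_left₀ 2 hs0.le
    rw [mul_pow, normC_sq, Real.sin_sq, hcos0, hr2]
    have h4 : s ^ 2 > 4 := by nlinarith
    have h3 : 1 - ‖a‖ ^ 2 < 4 / s ^ 2 := by linarith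
    calc _ < 4 / s ^ 2 * ((2 / s - s / 2) ^ 2 + (1 - (2 / s) ^ 2)) := by
          apply mul_lt_mul_of_pos_right h3
          have : (2 / s) ^ 2 < 1 := by nlinarith
          nlinarith [sq_nonneg (2 / s - s / 2)]
      _ = _ := by field_simp; ring
  obtain ⟨ε, hε, hball⟩ := Metric.isOpen_iff.1 hopen ψ0 hmem
  set p := max (ψ0 / 2) (ψ0 - ε / 2) with hp
  have hp0 : 0 < p := lt_of_lt_of_le (by linarith) (le_max_left _ _)
  have hpq : p < ψ0 := max_lt (by linarith) (by linarith)
  have hin : ∀ ψ ∈ Set.Icc p ψ0, r * normC s ψ < Real.sin ψ := by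
    intro ψ hψ
    apply hball
    rw [Metric.mem_ball, Real.dist_eq, abs_lt]
    have := le_max_right (ψ0 / 2) (ψ0 - ε / 2)
    constructor <;> linarith [hψ.1, hψ.2]
  have hsin : ∀ ψ ∈ Set.Icc p ψ0, 0 < Real.sin ψ := fun ψ hψ =>
    Real.sin_pos_of_pos_of_lt_pi (by linarith [hψ.1]) (by linarith [hψ.2])
  let x : ℝ → ℝ := fun ψ => Real.arcsin (r * normC s ψ / Real.sin ψ)
  let K : ℝ → ℝ := fun ψ => (Real.cos ψ - s / 2) / normC s ψ
  let G : ℝ → ℂ := fun ψ => Complex.cos (x ψ) + Complex.I * K ψ * Complex.sin (x ψ)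
  have hCne : ∀ ψ, normC s ψ ≠ 0 := fun ψ => (normC_pos s ψ hs).ne'
  have hx : ContinuousOn x (Set.Icc p ψ0) := by
    apply Real.continuous_arcsin.comp_continuousOn
    exact ContinuousOn.div (by fun_prop) (by fun_prop) fun ψ hψ => (hsin ψ hψ).ne'
  have hK : Continuous K := Continuous.div (by fun_prop) hcC hCne
  have hG : ContinuousOn G (Set.Icc p ψ0) := by
    have : Continuous fun y : ℝ => (y : ℂ) := Complex.continuous_ofReal
    have hxc := this.comp_continuousOn hx
    have hKc := (this.comp hK).continuousOn (s := Set.Icc p ψ0)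
    exact (Complex.continuous_cos.comp_continuousOn hxc).add
      ((continuousOn_const.mul hKc).mul (Complex.continuous_sin.comp_continuousOn hxc))
  have hsinx : ∀ ψ ∈ Set.Icc p ψ0, Real.sin (x ψ) = r * normC s ψ / Real.sin ψ := by
    intro ψ hψ
    have := normC_pos s ψ hs
    have h3 := hsin ψ hψ
    apply Real.sin_arcsin
    · have : 0 ≤ r * normC s ψ / Real.sin ψ := by positivity
      linarith
    · rw [div_le_one h3]; exact (hin ψ hψ).le
  have hGre : ∀ ψ ∈ Set.Icc p ψ0, G ψ ∈ Complex.slitPlane := by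
    intro ψ hψ
    left
    have : (G ψ).re = Real.cos (x ψ) := by
      simp only [G]
      rw [← Complex.ofReal_cos, ← Complex.ofReal_sin]
      simp [-Complex.ofReal_cos, -Complex.ofReal_sin]
    rw [this]
    have hC := normC_pos s ψ hs
    have h3 := hsin ψ hψ
    apply Real.cos_pos_of_mem_Ioo
    constructor
    · have : 0 ≤ x ψ := Real.arcsin_nonneg.2 (by positivity)
      linarith [Real.pi_pos]
    · apply Real.arcsin_lt_pi_div_two.2
      rw [div_lt_one h3]; exact (hin ψ hψ)
  have hGn : ∀ ψ ∈ Set.Icc p ψ0, ‖G ψ‖ = ‖a‖ := by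
    intro ψ hψ
    have hC := normC_pos s ψ hs
    have h3 := hsin ψ hψ
    have h4 := normC_sq s ψ
    rw [← sq_eq_sq₀ (norm_nonneg _) ha0]
    simp only [G]
    rw [normSq_aux, Real.cos_sq', hsinx ψ hψ]
    simp only [K]
    field_simp
    linear_combination 4 * ((-r ^ 2) * h4 - Real.sin ψ ^ 2 * hr2)
  have harg : ContinuousOn (fun ψ => Complex.arg (G ψ)) (Set.Icc p ψ0) := fun ψ hψ =>
    (Complex.continuousAt_arg (hGre ψ hψ)).comp_continuousWithinAt (hG ψ hψ)
  obtain ⟨k, m, ψ, hψ, h⟩ := ivt_aux (fun ψ => s / 2 * (x ψ / normC s ψ) + Complex.arg (G ψ))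
    (fun ψ => s / 2 * (2 * π / normC s ψ)) p ψ0 (Complex.arg a) hpq.le
    ((continuousOn_const.mul (hx.div hcC.continuousOn fun ψ _ => hCne ψ)).add harg)
    (continuousOn_const.mul (continuousOn_const.div hcC.continuousOn fun ψ _ => hCne ψ))
    (by
      have hlt : normC s p < normC s ψ0 := by
        apply Real.sqrt_lt_sqrt
        · nlinarith [Real.cos_le_one p]
        · have := Real.cos_lt_cos_of_nonneg_of_le_pi hp0.le hψ0lt.le hpq
          nlinarith
      have := normC_pos s p hs
      have hpi := Real.pi_pos
      gcongr)
  refine ⟨ψ, ⟨by linarith [hψ.1], by linarith [hψ.2]⟩, (x ψ + k * (2 * π)) / normC s ψ, ?_⟩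
  have hCc : (normC s ψ : ℂ) ≠ 0 := by exact_mod_cast hCne ψ
  have e1 : (normC s ψ : ℂ) * ((x ψ + k * (2 * π)) / normC s ψ : ℝ) = x ψ + k * (2 * π) := by
    push_cast; field_simp
  rw [fF, e1, Complex.cos_add_nat_mul_two_pi, Complex.sin_add_nat_mul_two_pi]
  have e2 : Complex.cos (x ψ) + Complex.I * (((Real.cos ψ : ℝ) - s / 2) / normC s ψ)
      * Complex.sin (x ψ) = G ψ := by
    simp only [G, K]; push_cast; rfl
  rw [e2, ← Complex.norm_mul_exp_arg_mul_I (G ψ), hGn ψ hψ]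
  conv_rhs => rw [← Complex.norm_mul_exp_arg_mul_I a]
  rw [mul_left_comm, ← Complex.exp_add]
  congr 1
  rw [Complex.exp_eq_exp_iff_exists_int]
  refine ⟨m, ?_⟩
  have h' : s / 2 * ((x ψ + k * (2 * π)) / normC s ψ) + Complex.arg (G ψ)
    = Complex.arg a + m * (2 * π) := by rw [← h]; ring
  have h'' := congrArg (fun y : ℝ => (y : ℂ) * Complex.I) h'
  push_cast at h'' ⊢
  linear_combination h''

/-- subcritical case `s > 2`, near points: if
`|⟨q₀,q₁⟩| > sqrt(1 − 4/s²)` then `q₀` and `q₁` are connected by a unit-speed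
magnetic geodesic of strength `s`. -/
theorem stmt_7 {n : ℕ} (s : ℝ) (hs : 2 < s)
    (q₀ q₁ : EuclideanSpace ℂ (Fin (n + 1)))
    (hq₀ : ‖q₀‖ = 1) (hq₁ : ‖q₁‖ = 1)
    (hfar : Real.sqrt (1 - 4 / s ^ 2) < ‖herm q₀ q₁‖) :
    ∃ ψ ∈ Set.Icc (0 : ℝ) π, ∃ γ : ℝ → EuclideanSpace ℂ (Fin (n + 1)),
      IsMagGeo s ψ γ ∧ ∃ t₀ t₁ : ℝ, γ t₀ = q₀ ∧ γ t₁ = q₁ := by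
  obtain ⟨a, ha⟩ : ∃ a : ℂ, a = inner ℂ q₀ q₁ := ⟨_, rfl⟩
  obtain ⟨b, hb⟩ : ∃ b, b = q₁ - a • q₀ := ⟨_, rfl⟩
  have hqq : inner ℂ q₀ q₀ = (1 : ℂ) := by rw [inner_self_eq_norm_sq_to_K, hq₀]; simp
  have hqb : inner ℂ q₀ b = 0 := by
    rw [hb, inner_sub_right, inner_smul_right, hqq, ← ha]; simp
  have hq1 : q₁ = a • q₀ + b := by rw [hb]; abel
  have hnorm : ‖a‖ ^ 2 + ‖b‖ ^ 2 = 1 := by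
    have : ‖a • q₀ + b‖ ^ 2 = 1 := by rw [← hq1, hq₁]; norm_num
    rw [@norm_add_sq ℂ, norm_smul, inner_smul_left, hqb, hq₀] at this
    simpa using this
  have hfar2 : Real.sqrt (1 - 4 / s ^ 2) < ‖a‖ := by
    rw [ha, norm_inner_symm]; exact hfar
  have hfar3 : 1 - 4 / s ^ 2 < ‖a‖ ^ 2 := Real.lt_sq_of_sqrt_lt hfar2
  have h0 : ∀ ψ w, fF s ψ 0 • q₀ + gF s ψ 0 • w = q₀ := by
    intro ψ w; simp [fF, gF]
  by_cases hb0 : b = 0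
  · have ha1 : ‖a‖ = 1 := by
      rw [hb0] at hnorm; simp at hnorm
      rcases hnorm with h | h
      · exact h
      · linarith [norm_nonneg a]
    refine ⟨0, ⟨le_rfl, Real.pi_pos.le⟩, _, geo s 0 hs q₀ 0 hq₀ (by simp) (by simp),
      0, Complex.arg a, h0 _ _, ?_⟩
    have hC : normC s 0 = s / 2 - 1 := by
      rw [normC, Real.cos_zero, ← Real.sqrt_sq (show 0 ≤ s / 2 - 1 by linarith)]
      congr 1; ring
    have hne : ((s / 2 - 1 : ℝ) : ℂ) ≠ 0 := by
      exact_mod_cast (show s / 2 - 1 ≠ 0 by linarith)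
    rw [hq1, hb0, smul_zero]
    congr 2
    have : ((Real.cos 0 : ℝ) - s / 2 : ℂ) / ((s / 2 - 1 : ℝ) : ℂ) = -1 := by
      rw [div_eq_iff hne]; push_cast; simp
    rw [fF, hC, this]
    rw [show ∀ z : ℂ, Complex.cos z + Complex.I * (-1) * Complex.sin z =
      Complex.cos (-z) + Complex.sin (-z) * Complex.I from fun z => by
        rw [Complex.cos_neg, Complex.sin_neg]; ring]
    rw [← Complex.exp_mul_I, ← Complex.exp_add]
    conv_rhs => rw [← Complex.norm_mul_exp_arg_mul_I a, ha1]
    push_cast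
    rw [one_mul]
    congr 1
    ring
  · have hbpos : 0 < ‖b‖ := norm_pos_iff.2 hb0
    have ha1 : ‖a‖ < 1 := by nlinarith [norm_nonneg a]
    obtain ⟨ψ, hψ, t, ht⟩ := analytic s hs a hfar3 ha1
    have hfg := norm_fF_gF s ψ t hs
    rw [ht] at hfg
    have hg0 : gF s ψ t ≠ 0 := by
      intro h
      rw [h] at hfg
      simp at hfg
      rcases hfg with h | h
      · linarith
      · linarith [norm_nonneg a]
    refine ⟨ψ, hψ, _, geo s ψ hs q₀ ((gF s ψ t)⁻¹ • b) hq₀ ?_ ?_, 0, t, h0 _ _, ?_⟩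
    · rw [norm_smul, norm_inv]
      have : ‖gF s ψ t‖ ≠ 0 := norm_ne_zero_iff.2 hg0
      field_simp
      linarith
    · rw [inner_smul_right, hqb, mul_zero]
    · simp only [ht]
      rw [smul_smul, mul_inv_cancel₀ hg0, one_smul, ← hq1]
end
end

section
/- Let n ≥ 0, s > 2, and let q₀, q₁ be points on the unit sphere S^{2n+1} ⊂ ℂ^{n+1} with |⟨q₀, q₁⟩| < sqrt(1 − 4/s²). Then q₀ and q₁ are NOT connected by any unit-speed magnetic geodesic of strength s: for every ψ ∈ [0,π], every unit-speed magnetic geodesic γ of strength s with contact angle ψ, and all t₀, t₁ ∈ ℝ, it is impossible that γ(t₀) = q₀ and γ(t₁) = q₁. (Unit-speed strength s corresponds to kinetic energy k = 1/(2s²) < 1/8, and sqrt(1 − 4/s²) = sqrt(1 − 8k); this is the failure of the Hopf–Rinow property at subcritical energies.) -/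
noncomputable section

open scoped Real

theorem ode_aux {n : ℕ} (a : ℝ) (f : ℝ → EuclideanSpace ℂ (Fin (n + 1)))
    (hf : ∀ t, HasDerivAt f (((a : ℂ) * Complex.I) • f t) t) (t : ℝ) :
    f t = Complex.exp (((a * t : ℝ) : ℂ) * Complex.I) • f 0 := by
  have he : ∀ t : ℝ, HasDerivAt (fun t : ℝ => Complex.exp (-(((a * t : ℝ) : ℂ) * Complex.I)))
      (Complex.exp (-(((a * t : ℝ) : ℂ) * Complex.I)) * (-((a : ℂ) * Complex.I))) t := by
    intro t
    have h1 : HasDerivAt (fun t : ℝ => a * t) a t := by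
      simpa using (hasDerivAt_id t).const_mul a
    have h2 := (h1.ofReal_comp.mul_const Complex.I).neg
    exact h2.cexp
  have hg : ∀ t : ℝ, HasDerivAt
      (fun t : ℝ => Complex.exp (-(((a * t : ℝ) : ℂ) * Complex.I)) • f t) 0 t := by
    intro t
    have h := (he t).smul (hf t)
    refine h.congr_deriv ?_
    module
  have hc := is_const_of_deriv_eq_zero (fun t => (hg t).differentiableAt)
    (fun t => (hg t).deriv) t 0
  simp only [mul_zero, Complex.ofReal_zero, zero_mul, neg_zero, Complex.exp_zero, one_smul] at hc
  rw [← hc, smul_smul, ← Complex.exp_add, add_neg_cancel, Complex.exp_zero, one_smul]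

theorem conj_exp_aux (u v : ℝ) : (starRingEnd ℂ) (Complex.exp ((u : ℂ) * Complex.I)) *
    Complex.exp ((v : ℂ) * Complex.I) = Complex.exp (((v - u : ℝ) : ℂ) * Complex.I) := by
  rw [← Complex.exp_conj, ← Complex.exp_add]
  congr 1
  simp
  ring

set_option maxHeartbeats 2000000 in
/-- subcritical case `s > 2`, far points: if
`|⟨q₀,q₁⟩| < sqrt(1 − 4/s²)` then no unit-speed magnetic geodesic of strength `s`
connects `q₀` and `q₁`. -/
theorem stmt_8 {n : ℕ} (s : ℝ) (hs : 2 < s)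
    (q₀ q₁ : EuclideanSpace ℂ (Fin (n + 1)))
    (hq₀ : ‖q₀‖ = 1) (hq₁ : ‖q₁‖ = 1)
    (hclose : ‖herm q₀ q₁‖ < Real.sqrt (1 - 4 / s ^ 2)) :
    ∀ ψ ∈ Set.Icc (0 : ℝ) π, ∀ γ : ℝ → EuclideanSpace ℂ (Fin (n + 1)),
      IsMagGeo s ψ γ → ∀ t₀ t₁ : ℝ, ¬(γ t₀ = q₀ ∧ γ t₁ = q₁) := by
  rintro ψ - γ ⟨hsm, hode, h0, h1, h2, h3⟩ t₀ t₁ ⟨rfl, rfl⟩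
  unfold herm at *
  set c := Real.cos ψ with hc
  have hc1 : c ≤ 1 := Real.cos_le_one ψ
  set R := normC s ψ with hR
  have hpos : 0 < s ^ 2 / 4 + 1 - s * c := by nlinarith [sq_nonneg (s / 2 - 1)]
  have hR0 : 0 < R := Real.sqrt_pos.mpr hpos
  have hR2 : R ^ 2 = s ^ 2 / 4 + 1 - s * c := Real.sq_sqrt hpos.le
  have hd0 : ∀ t, HasDerivAt γ (deriv γ t) t := fun t =>
    ((hsm.differentiable (by simp)) t).hasDerivAt
  have hd1 : ∀ t, HasDerivAt (deriv γ) (deriv (deriv γ) t) t := fun t => by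
    have : ContDiff ℝ 1 (deriv γ) := by
      have h : ContDiff ℝ (1 + 1) γ := by
        have h' := contDiff_infty.mp hsm 2
        exact h'
      exact (contDiff_succ_iff_deriv.mp h).2.2
    exact ((this.differentiable (by simp)) t).hasDerivAt
  have hfac : ∀ a b : ℝ, a + b = s → a * b = s * c - 1 → ∀ t,
      deriv γ t - ((b : ℂ) * Complex.I) • γ t = Complex.exp (((a * t : ℝ) : ℂ) * Complex.I) •
        (deriv γ 0 - ((b : ℂ) * Complex.I) • γ 0) := by
    intro a b hab hab' t
    refine ode_aux a (fun t => deriv γ t - ((b : ℂ) * Complex.I) • γ t) (fun t => ?_) t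
    have h := (hd1 t).sub ((hd0 t).const_smul ((b : ℂ) * Complex.I))
    refine h.congr_deriv ?_
    have ho := hode t
    have e1 : deriv (deriv γ) t = ((s : ℂ) * Complex.I) • deriv γ t
      - ((1 : ℂ) - (s : ℂ) * (c : ℂ)) • γ t := by
      rw [← sub_eq_zero, ← ho]; module
    have e2 : (s : ℂ) * c = 1 + a * b := by
      have : s * c = 1 + a * b := by linarith
      exact_mod_cast this
    have e3 : (s : ℂ) = a + b := by rw [← hab]; push_cast; rfl
    rw [e1, e2, e3, smul_sub, smul_smul]
    have e4 : (a : ℂ) * Complex.I * (b * Complex.I) = -(a * b) := by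
      linear_combination (a * b : ℂ) * Complex.I_mul_I
    rw [e4]
    module
  set x := γ 0 with hx
  set y := deriv γ 0 with hy
  have hyx : inner ℂ y x = -(c : ℂ) * Complex.I := by
    rw [inner_smul_right] at h3
    apply Complex.ext
    · simpa using h2
    · simp at h3 ⊢; linarith
  have hxy : inner ℂ x y = (c : ℂ) * Complex.I := by
    rw [← inner_conj_symm, hyx]; simp
  have hxx : inner ℂ x x = (1 : ℂ) := by
    rw [inner_self_eq_norm_sq_to_K, h0]; simp
  have hyy : inner ℂ y y = (1 : ℂ) := by
    rw [inner_self_eq_norm_sq_to_K, h1]; simp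
  have hin : ∀ a b : ℝ, inner ℂ (y - ((a : ℂ) * Complex.I) • x) (y - ((b : ℂ) * Complex.I) • x)
      = ((1 - (a + b) * c + a * b : ℝ) : ℂ) := by
    intro a b
    simp only [inner_sub_left, inner_sub_right, inner_smul_left, inner_smul_right, hxx, hyy,
      hxy, hyx, map_mul, Complex.conj_I, Complex.conj_ofReal]
    push_cast
    linear_combination ((a + b) * c - a * b : ℂ) * Complex.I_mul_I
  obtain ⟨α, hα⟩ : ∃ α, α = s / 2 - R := ⟨_, rfl⟩
  obtain ⟨β, hβ⟩ : ∃ β, β = s / 2 + R := ⟨_, rfl⟩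
  have hsum : α + β = s := by rw [hα, hβ]; ring
  have hprod : α * β = s * c - 1 := by rw [hα, hβ]; linear_combination -hR2
  have hp := hfac α β hsum hprod
  have hm := hfac β α (by linarith) (by linarith)
  have hγ : ∀ t, ((2 * R : ℝ) * Complex.I : ℂ) • γ t =
      Complex.exp (((β * t : ℝ) : ℂ) * Complex.I) • (y - ((α : ℂ) * Complex.I) • x) -
      Complex.exp (((α * t : ℝ) : ℂ) * Complex.I) • (y - ((β : ℂ) * Complex.I) • x) := by
    intro t
    rw [← hp t, ← hm t]
    have : ((2 * R : ℝ) : ℂ) = β - α := by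
      rw [hα, hβ]; push_cast; ring
    rw [this]
    module
  have key : ((4 * R ^ 2 : ℝ) : ℂ) * inner ℂ (γ t₁) (γ t₀) =
      ((1 - 2 * α * c + α ^ 2 : ℝ) : ℂ) * Complex.exp (((β * t₀ - β * t₁ : ℝ) : ℂ) * Complex.I) +
      ((1 - 2 * β * c + β ^ 2 : ℝ) : ℂ) * Complex.exp (((α * t₀ - α * t₁ : ℝ) : ℂ) * Complex.I) := by
    have e1 : inner ℂ (((2 * R : ℝ) * Complex.I : ℂ) • γ t₁) (((2 * R : ℝ) * Complex.I : ℂ) • γ t₀)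
        = ((4 * R ^ 2 : ℝ) : ℂ) * inner ℂ (γ t₁) (γ t₀) := by
      rw [inner_smul_left, inner_smul_right, map_mul, Complex.conj_I, Complex.conj_ofReal]
      push_cast
      linear_combination (-4 * R ^ 2 * inner ℂ (γ t₁) (γ t₀) : ℂ) * Complex.I_mul_I
    rw [← e1, hγ, hγ, ← conj_exp_aux, ← conj_exp_aux]
    have z1 : 1 - (α + β) * c + α * β = 0 := by rw [hsum, hprod]; ring
    have z2 : 1 - (β + α) * c + β * α = 0 := by linarith
    simp only [inner_sub_left (𝕜 := ℂ) (Complex.exp _ • _), inner_sub_right (𝕜 := ℂ) _ (Complex.exp _ • _),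
      inner_smul_left _ (y - _), inner_smul_right _ (y - _), hin, z1, z2]
    push_cast
    ring
  have hn := congrArg norm key
  have hlow : (2 * R) * (s - 2 * c) ≤ 4 * R ^ 2 * ‖(inner ℂ (γ t₁) (γ t₀) : ℂ)‖ := by
    have hl : ‖((4 * R ^ 2 : ℝ) : ℂ) * inner ℂ (γ t₁) (γ t₀)‖
        = 4 * R ^ 2 * ‖(inner ℂ (γ t₁) (γ t₀) : ℂ)‖ := by
      rw [norm_mul, Complex.norm_real, Real.norm_of_nonneg (by positivity)]
    rw [← hl, key, add_comm]
    refine le_trans ?_ (norm_sub_le_norm_add _ _)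
    rw [norm_mul, norm_mul, Complex.norm_exp_ofReal_mul_I, Complex.norm_exp_ofReal_mul_I,
      Complex.norm_real, Complex.norm_real]
    have hA : 0 ≤ 1 - 2 * α * c + α ^ 2 := by
      nlinarith [sq_nonneg (α - c), Real.neg_one_le_cos ψ]
    have hB : 0 ≤ 1 - 2 * β * c + β ^ 2 := by
      nlinarith [sq_nonneg (β - c), Real.neg_one_le_cos ψ]
    rw [Real.norm_of_nonneg hA, Real.norm_of_nonneg hB, hα, hβ]
    apply le_of_eq; ring
  have hlow2 : (s - 2 * c) ≤ 2 * R * ‖(inner ℂ (γ t₁) (γ t₀) : ℂ)‖ := by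
    nlinarith
  have hsq : ‖(inner ℂ (γ t₁) (γ t₀) : ℂ)‖ ^ 2 < 1 - 4 / s ^ 2 :=
    (Real.lt_sqrt (norm_nonneg _)).mp hclose
  have h5 : (s - 2 * c) ^ 2 ≤ (2 * R * ‖(inner ℂ (γ t₁) (γ t₀) : ℂ)‖) ^ 2 :=
    pow_le_pow_left₀ (by linarith) hlow2 2
  have h6 : (s - 2 * c) ^ 2 < 4 * R ^ 2 * (1 - 4 / s ^ 2) := by
    nlinarith [mul_lt_mul_of_pos_left hsq (show 0 < 4 * R ^ 2 by positivity)]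
  have hs0 : 0 < s := by linarith
  have h7 : (s - 2 * c) ^ 2 * s ^ 2 < 4 * R ^ 2 * (s ^ 2 - 4) := by
    have := mul_lt_mul_of_pos_right h6 (show 0 < s ^ 2 by positivity)
    have e : 4 * R ^ 2 * (1 - 4 / s ^ 2) * s ^ 2 = 4 * R ^ 2 * (s ^ 2 - 4) := by
      field_simp
    linarith
  rw [hR2] at h7
  nlinarith [sq_nonneg (s * c - 2)]
end
end

section
/- Let n ≥ 0, s > 2, and let q₀, q₁ be points on the unit sphere S^{2n+1} ⊂ ℂ^{n+1} with |⟨q₀, q₁⟩| = sqrt(1 − 4/s²). Set β := 1 − s/sqrt(s² − 4). Then q₀ and q₁ are connected by a unit-speed magnetic geodesic of strength s (there exist ψ ∈ [0,π], a unit-speed magnetic geodesic γ of strength s with contact angle ψ, and t₀, t₁ ∈ ℝ with γ(t₀) = q₀, γ(t₁) = q₁) if and only if there exists m ∈ ℤ such that ⟨q₀, q₁⟩ = sqrt(1 − 4/s²)·e^{i·β·(π/2 + m·π)}. Moreover, in that case the contact angle is necessarily ψ = arccos(2/s). -/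
noncomputable section

open scoped Real

lemma exp_ode {n : ℕ} (g : ℝ → EuclideanSpace ℂ (Fin (n + 1))) (l : ℂ)
    (hg : ∀ t, HasDerivAt g (l • g t) t) (t : ℝ) : g t = Complex.exp (l * t) • g 0 := by
  have h1 : ∀ t : ℝ, HasDerivAt (fun t : ℝ => Complex.exp (-(l * t)) • g t) 0 t := by
    intro t
    have h2 : HasDerivAt (fun t : ℝ => Complex.exp (-(l * t))) (Complex.exp (-(l * t)) * (-l)) t := by
      have := (((hasDerivAt_id (t : ℂ)).const_mul l).neg.cexp).comp_ofReal
      simpa using this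
    have h3 := h2.smul (hg t)
    refine h3.congr_deriv ?_
    module
  have h2 := is_const_of_deriv_eq_zero (fun t => (h1 t).differentiableAt)
    (fun t => (h1 t).deriv) t 0
  simp only [Complex.ofReal_zero, mul_zero, neg_zero, Complex.exp_zero, one_smul] at h2
  rw [← h2, smul_smul, ← Complex.exp_add]
  simp

lemma geo_formula {n : ℕ} {s ψ : ℝ} (hs : 2 < s) {γ : ℝ → EuclideanSpace ℂ (Fin (n + 1))}
    (h : IsMagGeo s ψ γ) (R : ℝ) (hR : R ^ 2 = s ^ 2 / 4 + 1 - s * Real.cos ψ) (hR0 : 0 < R)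
    (t : ℝ) : γ t = (Complex.exp (Complex.I * (s * t / 2 : ℝ)) *
        (Real.cos (R * t) - Complex.I * s * Real.sin (R * t) / (2 * R))) • γ 0 +
        (Complex.exp (Complex.I * (s * t / 2 : ℝ)) * Real.sin (R * t) / R) • deriv γ 0 := by
  obtain ⟨hc, hode, -⟩ := h
  have hd : ∀ t, HasDerivAt γ (deriv γ t) t := fun t =>
    (hc.differentiable (by simp) t).hasDerivAt
  have hd2 : ∀ t, HasDerivAt (deriv γ) (deriv (deriv γ) t) t := fun t =>
    ((contDiff_infty_iff_deriv.1 hc).2.differentiable (by simp) t).hasDerivAt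
  have hRC : (R : ℂ) ^ 2 = s ^ 2 / 4 + 1 - s * Real.cos ψ := by exact_mod_cast hR
  have hR0' : (R : ℂ) ≠ 0 := by exact_mod_cast hR0.ne'
  have key : ∀ e : ℂ, e ^ 2 = 1 → ∀ t : ℝ,
      deriv γ t - (Complex.I * (s / 2 + e * R)) • γ t =
      Complex.exp (Complex.I * (s / 2 - e * R) * t) •
        (deriv γ 0 - (Complex.I * (s / 2 + e * R)) • γ 0) := by
    intro e he t
    refine exp_ode (fun t => deriv γ t - (Complex.I * (s / 2 + e * R)) • γ t) _ ?_ t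
    intro t
    have h3 := (hd2 t).sub ((hd t).const_smul (Complex.I * ((s : ℂ) / 2 + e * R)))
    refine h3.congr_deriv ?_
    have h4 : deriv (deriv γ) t = ((s : ℂ) * Complex.I) • deriv γ t
      - ((1 : ℂ) - (s : ℂ) * (Real.cos ψ : ℂ)) • γ t := by
      rw [← sub_eq_zero, ← hode t]; module
    rw [h4]
    have h5 : (Complex.I * (s / 2 - e * R)) * (Complex.I * (s / 2 + e * R)) =
      ((1 : ℂ) - (s : ℂ) * (Real.cos ψ : ℂ)) := by
      linear_combination (s ^ 2 / 4 - e^2 * R ^ 2) * Complex.I_sq + he * (R:ℂ)^2 + hRC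
    rw [← h5]
    module
  have hp := key 1 (by norm_num) t
  have hm := key (-1) (by norm_num) t
  have e1 : Complex.exp (Complex.I * (s / 2 - 1 * R) * t) =
      Complex.exp (Complex.I * (s * t / 2 : ℝ)) * (Real.cos (R * t) - Real.sin (R * t) * Complex.I) := by
    rw [Complex.ofReal_cos, Complex.ofReal_sin, Complex.cos_sub_sin_I, ← Complex.exp_add]
    congr 1; push_cast; ring
  have e2 : Complex.exp (Complex.I * (s / 2 - (-1) * R) * t) =
      Complex.exp (Complex.I * (s * t / 2 : ℝ)) * (Real.cos (R * t) + Real.sin (R * t) * Complex.I) := by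
    rw [Complex.ofReal_cos, Complex.ofReal_sin, Complex.cos_add_sin_I, ← Complex.exp_add]
    congr 1; push_cast; ring
  rw [e1] at hp
  rw [e2] at hm
  have hI := Complex.I_ne_zero
  have h6 : γ t = (1 / (2 * Complex.I * R)) • ((deriv γ t - (Complex.I * (s / 2 + (-1) * R)) • γ t)
     - (deriv γ t - (Complex.I * (s / 2 + 1 * R)) • γ t)) := by
    match_scalars
    · field_simp
      ring
    · field_simp
      ring
  rw [h6, hp, hm]
  generalize Complex.exp (Complex.I * (s * t / 2 : ℝ)) = E
  match_scalars
  · field_simp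
    ring_nf
    try simp only [Complex.I_sq]
    try ring
  · field_simp
    ring

lemma geo_herm {n : ℕ} {s ψ : ℝ} (hs : 2 < s) {γ : ℝ → EuclideanSpace ℂ (Fin (n + 1))}
    (h : IsMagGeo s ψ γ) (R : ℝ) (hR : R ^ 2 = s ^ 2 / 4 + 1 - s * Real.cos ψ) (hR0 : 0 < R)
    (t₀ t₁ : ℝ) : herm (γ t₀) (γ t₁) = Complex.exp (Complex.I * (s * (t₀ - t₁) / 2 : ℝ)) *
      (Real.cos (R * (t₀ - t₁)) + Complex.I * ((Real.cos ψ - s / 2) / R : ℝ) *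
        Real.sin (R * (t₀ - t₁))) := by
  rw [geo_formula hs h R hR hR0 t₀, geo_formula hs h R hR hR0 t₁]
  obtain ⟨hc, hode, h0, h1, h2, h3⟩ := h
  have hRC : (R : ℂ) ^ 2 = s ^ 2 / 4 + 1 - s * Real.cos ψ := by exact_mod_cast hR
  have hR0' : (R : ℂ) ≠ 0 := by exact_mod_cast hR0.ne'
  generalize γ 0 = a at *
  generalize deriv γ 0 = b at *
  have aa : inner ℂ a a = (1 : ℂ) := by rw [inner_self_eq_norm_sq_to_K, h0]; simp
  have bb : inner ℂ b b = (1 : ℂ) := by rw [inner_self_eq_norm_sq_to_K, h1]; simp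
  have ba : inner ℂ b a = - (Complex.I * Real.cos ψ) := by
    simp only [herm, inner_smul_right, Complex.mul_re, Complex.I_re, Complex.I_im] at h2 h3
    apply Complex.ext
    · simp [h2, -Complex.ofReal_cos]
    · simp [-Complex.ofReal_cos]; linarith
  have ab : inner ℂ a b = Complex.I * Real.cos ψ := by
    rw [← inner_conj_symm, ba]; simp [-Complex.ofReal_cos]
  have eE : Complex.exp (Complex.I * (s * (t₀ - t₁) / 2 : ℝ)) =
    Complex.exp (Complex.I * (s * t₀ / 2 : ℝ)) *
      (starRingEnd ℂ) (Complex.exp (Complex.I * (s * t₁ / 2 : ℝ))) := by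
    rw [← Complex.exp_conj, ← Complex.exp_add]
    congr 1; rw [map_mul, Complex.conj_I, Complex.conj_ofReal]; push_cast; ring
  rw [eE, mul_sub R, Real.cos_sub, Real.sin_sub]
  simp only [herm, inner_add_left, inner_add_right, inner_smul_left, inner_smul_right, aa, bb, ab, ba]
  simp only [map_mul, map_sub, map_div₀, Complex.conj_ofReal, Complex.conj_I, map_ofNat]
  generalize Complex.exp (Complex.I * (s * t₀ / 2 : ℝ)) = E0
  generalize (starRingEnd ℂ) (Complex.exp (Complex.I * (s * t₁ / 2 : ℝ))) = E1
  generalize Real.cos (R * t₀) = C0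
  generalize Real.cos (R * t₁) = C1
  generalize Real.sin (R * t₀) = S0
  generalize Real.sin (R * t₁) = S1
  push_cast only [Complex.ofReal_add, Complex.ofReal_mul, Complex.ofReal_sub, Complex.ofReal_div, Complex.ofReal_ofNat]
  generalize hcc : ((Real.cos ψ : ℝ) : ℂ) = c at *
  field_simp
  have hI := Complex.I_sq
  grind

lemma exp_deriv {n : ℕ} (l : ℂ) (w : EuclideanSpace ℂ (Fin (n + 1))) (t : ℝ) :
    HasDerivAt (fun t : ℝ => Complex.exp (l * t) • w) (Complex.exp (l * t) • (l • w)) t := by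
  have h2 : HasDerivAt (fun t : ℝ => Complex.exp (l * t)) (Complex.exp (l * t) * l) t := by
    have := (((hasDerivAt_id (t : ℂ)).const_mul l).cexp).comp_ofReal
    simpa using this
  have := h2.smul_const w
  rwa [mul_smul] at this

lemma geo_exists {n : ℕ} {s ψ : ℝ} (q v : EuclideanSpace ℂ (Fin (n + 1)))
    (R : ℝ) (hR : R ^ 2 = s ^ 2 / 4 + 1 - s * Real.cos ψ) (hR0 : 0 < R)
    (hq : ‖q‖ = 1) (hv : ‖v‖ = 1) (hqv : inner ℂ q v = (((Real.cos ψ - s / 2) / R : ℝ) : ℂ)) :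
    IsMagGeo s ψ (fun t : ℝ => Complex.exp (Complex.I * (s / 2 + R) * t) • ((1 / 2 : ℂ) • (q + v)) +
      Complex.exp (Complex.I * (s / 2 - R) * t) • ((1 / 2 : ℂ) • (q - v))) := by
  have hRC : (R : ℂ) ^ 2 = s ^ 2 / 4 + 1 - s * Real.cos ψ := by exact_mod_cast hR
  have hR0' : (R : ℂ) ≠ 0 := by exact_mod_cast hR0.ne'
  have D : ∀ w1 w0 : EuclideanSpace ℂ (Fin (n + 1)),
    deriv (fun t : ℝ => Complex.exp (Complex.I * (s / 2 + R) * t) • w1 +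
      Complex.exp (Complex.I * (s / 2 - R) * t) • w0) =
    (fun t : ℝ => Complex.exp (Complex.I * (s / 2 + R) * t) • ((Complex.I * (s / 2 + R)) • w1) +
      Complex.exp (Complex.I * (s / 2 - R) * t) • ((Complex.I * (s / 2 - R)) • w0)) := by
    intro w1 w0
    ext1 t
    exact ((exp_deriv _ w1 t).add (exp_deriv _ w0 t)).deriv
  have hd0 : (1 / 2 : ℂ) • ((Complex.I * (s / 2 + R)) • (q + v)) + (1 / 2 : ℂ) • ((Complex.I * (s / 2 - R)) • (q - v))
     = (Complex.I * s / 2) • q + (Complex.I * R) • v := by module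
  have qq : inner ℂ q q = (1 : ℂ) := by rw [inner_self_eq_norm_sq_to_K, hq]; simp
  have vv : inner ℂ v v = (1 : ℂ) := by rw [inner_self_eq_norm_sq_to_K, hv]; simp
  have vq : inner ℂ v q = (((Real.cos ψ - s / 2) / R : ℝ) : ℂ) := by
    rw [← inner_conj_symm, hqv, Complex.conj_ofReal]
  have hI := Complex.I_sq
  have hdd : inner ℂ ((Complex.I * s / 2) • q + (Complex.I * R) • v) q = -(Complex.I * Real.cos ψ) := by
    simp only [inner_add_left, inner_smul_left, qq, vq]
    simp only [map_mul, map_div₀, Complex.conj_ofReal, Complex.conj_I, map_ofNat]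
    push_cast [-Complex.ofReal_cos]
    field_simp
    ring
  unfold IsMagGeo
  rw [D, D]
  have z0 : ∀ w1 w0 : EuclideanSpace ℂ (Fin (n + 1)),
    Complex.exp (Complex.I * (s / 2 + R) * (0:ℝ)) • w1 +
      Complex.exp (Complex.I * (s / 2 - R) * (0:ℝ)) • w0 = w1 + w0 := by simp
  simp only [z0]
  have z1 : (1 / 2 : ℂ) • (q + v) + (1 / 2 : ℂ) • (q - v) = q := by module
  have z2 : (Complex.I * (s / 2 + R)) • (1 / 2 : ℂ) • (q + v) + (Complex.I * (s / 2 - R)) • (1 / 2 : ℂ) • (q - v)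
     = (Complex.I * s / 2) • q + (Complex.I * R) • v := by module
  rw [z1, z2]
  refine ⟨?_, ?_, hq, ?_, ?_, ?_⟩
  · have : ∀ l : ℂ, ContDiff ℝ (⊤ : ℕ∞) (fun t : ℝ => Complex.exp (l * t)) := fun l =>
      (contDiff_const.mul Complex.ofRealCLM.contDiff).cexp
    exact ((this _).smul contDiff_const).add ((this _).smul contDiff_const)
  · intro t
    generalize Complex.exp (Complex.I * (s / 2 + R) * t) = E1
    generalize Complex.exp (Complex.I * (s / 2 - R) * t) = E0
    have h5 : (1 : ℂ) - (s : ℂ) * (Real.cos ψ : ℂ) = R ^ 2 - s ^ 2 / 4 := by rw [hRC]; ring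
    rw [h5]
    match_scalars <;> grind
  · have : (((‖(Complex.I * s / 2) • q + (Complex.I * R) • v‖ : ℝ) : ℂ)) ^ 2 = 1 := by
      have h := inner_self_eq_norm_sq_to_K (𝕜 := ℂ) ((Complex.I * s / 2) • q + (Complex.I * R) • v)
      refine h.symm.trans ?_
      rw [inner_add_right, inner_smul_right, hdd]
      simp only [inner_add_left, inner_smul_left, inner_smul_right, vv, hqv]
      simp only [map_mul, map_div₀, Complex.conj_ofReal, Complex.conj_I, map_ofNat]
      push_cast [-Complex.ofReal_cos]
      generalize hcc : ((Real.cos ψ : ℝ) : ℂ) = c at *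
      field_simp
      grind
    have h2 : ‖(Complex.I * s / 2) • q + (Complex.I * R) • v‖ ^ 2 = 1 := by exact_mod_cast this
    exact (pow_eq_one_iff_of_nonneg (norm_nonneg _) two_ne_zero).1 h2
  · simp only [herm]; rw [hdd]; simp [-Complex.ofReal_cos]
  · simp only [herm]; rw [inner_smul_right, hdd]; simp [-Complex.ofReal_cos]

lemma geo_extremal {n : ℕ} {s ψ : ℝ} (hs : 2 < s) {γ : ℝ → EuclideanSpace ℂ (Fin (n + 1))}
    (h : IsMagGeo s ψ γ) (R : ℝ) (hR : R ^ 2 = s ^ 2 / 4 + 1 - s * Real.cos ψ) (hR0 : 0 < R)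
    (t₀ t₁ : ℝ) (hbd : ‖herm (γ t₀) (γ t₁)‖ = Real.sqrt (1 - 4 / s ^ 2)) :
    Real.cos ψ = 2 / s ∧ Real.cos (R * (t₀ - t₁)) = 0 := by
  have hs0 : 0 < s := by linarith
  have hpos : 0 ≤ 1 - 4 / s ^ 2 := by
    rw [sub_nonneg, div_le_one (by positivity)]; nlinarith
  rw [geo_herm hs h R hR hR0, norm_mul, mul_comm Complex.I, Complex.norm_exp_ofReal_mul_I, one_mul] at hbd
  have h1 := congrArg (· ^ 2) hbd
  simp only [Real.sq_sqrt hpos] at h1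
  rw [← Complex.normSq_eq_norm_sq] at h1
  have h2 : Complex.normSq (Real.cos (R * (t₀ - t₁)) + Complex.I * ((Real.cos ψ - s / 2) / R : ℝ) *
        Real.sin (R * (t₀ - t₁))) = Real.cos (R * (t₀ - t₁)) ^ 2 +
        (((Real.cos ψ - s / 2) / R) * Real.sin (R * (t₀ - t₁))) ^ 2 := by
    have := Complex.normSq_add_mul_I (Real.cos (R * (t₀ - t₁))) (((Real.cos ψ - s / 2) / R) * Real.sin (R * (t₀ - t₁)))
    rw [← this]; congr 1; push_cast; ring
  rw [h2] at h1
  have h3 := Real.sin_sq_add_cos_sq (R * (t₀ - t₁))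
  have h4 := Real.cos_sq_le_one ψ
  generalize Real.cos (R * (t₀ - t₁)) = C at *
  generalize Real.sin (R * (t₀ - t₁)) = S at *
  generalize Real.cos ψ = c at *
  have h5 : s ^ 2 * (1 - c ^ 2) * S ^ 2 = 4 * R ^ 2 := by
    field_simp at h1
    linear_combination (-1 / 4) * h1 + s ^ 2 * R ^ 2 * h3 - s ^ 2 * S ^ 2 * hR
  have h6 : (s * c - 2) ^ 2 + s ^ 2 * (1 - c ^ 2) * C ^ 2 = 0 := by
    have : C ^ 2 = 1 - S ^ 2 := by linarith
    rw [this]; nlinarith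
  have h7 : 0 ≤ s ^ 2 * (1 - c ^ 2) * C ^ 2 := by
    have : 0 ≤ 1 - c ^ 2 := by linarith
    positivity
  have h8 : s * c - 2 = 0 := by
    have : (s * c - 2) ^ 2 = 0 := le_antisymm (by linarith) (sq_nonneg _)
    exact pow_eq_zero_iff two_ne_zero |>.1 this
  have hc : c = 2 / s := by field_simp; linarith
  refine ⟨hc, ?_⟩
  have h9 : s ^ 2 * (1 - c ^ 2) * C ^ 2 = 0 := by rw [h8] at h6; linarith
  have h10 : 0 < s ^ 2 * (1 - c ^ 2) := by
    have : s ^ 2 * (1 - c ^ 2) = s ^ 2 - (s * c) ^ 2 := by ring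
    rw [this, show s * c = 2 by linarith]; nlinarith
  rcases mul_eq_zero.1 h9 with h | h
  · linarith
  · exact pow_eq_zero_iff two_ne_zero |>.1 h

lemma R_exists {s : ℝ} (ψ : ℝ) (hs : 2 < s) : ∃ R : ℝ, R ^ 2 = s ^ 2 / 4 + 1 - s * Real.cos ψ ∧ 0 < R := by
  have : 0 < s ^ 2 / 4 + 1 - s * Real.cos ψ := by
    nlinarith [Real.cos_le_one ψ, mul_pos (sub_pos.2 hs) (sub_pos.2 hs)]
  exact ⟨Real.sqrt _, Real.sq_sqrt this.le, Real.sqrt_pos.2 this⟩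

/-- subcritical case `s > 2`, boundary points: if
`|⟨q₀,q₁⟩| = sqrt(1 − 4/s²)` then, with `β = 1 − s/sqrt(s² − 4)`, the two points
are connected by a unit-speed magnetic geodesic of strength `s` iff
`⟨q₀,q₁⟩ = sqrt(1 − 4/s²)·e^{iβ(π/2 + mπ)}` for some integer `m`; moreover any
connecting geodesic has contact angle `arccos(2/s)`. -/
theorem stmt_9 {n : ℕ} (s : ℝ) (hs : 2 < s)
    (q₀ q₁ : EuclideanSpace ℂ (Fin (n + 1)))
    (hq₀ : ‖q₀‖ = 1) (hq₁ : ‖q₁‖ = 1)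
    (hbd : ‖herm q₀ q₁‖ = Real.sqrt (1 - 4 / s ^ 2)) :
    ((∃ ψ ∈ Set.Icc (0 : ℝ) π, ∃ γ : ℝ → EuclideanSpace ℂ (Fin (n + 1)),
        IsMagGeo s ψ γ ∧ ∃ t₀ t₁ : ℝ, γ t₀ = q₀ ∧ γ t₁ = q₁) ↔
      ∃ m : ℤ, herm q₀ q₁ = (Real.sqrt (1 - 4 / s ^ 2) : ℂ) *
        Complex.exp (Complex.I *
          (((1 - s / Real.sqrt (s ^ 2 - 4)) * (π / 2 + (m : ℝ) * π) : ℝ) : ℂ))) ∧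
    (∀ ψ ∈ Set.Icc (0 : ℝ) π, ∀ γ : ℝ → EuclideanSpace ℂ (Fin (n + 1)),
      IsMagGeo s ψ γ → (∃ t₀ t₁ : ℝ, γ t₀ = q₀ ∧ γ t₁ = q₁) →
        ψ = Real.arccos (2 / s)) := by
  have hs0 : 0 < s := by linarith
  have hs4 : 0 < s ^ 2 - 4 := by nlinarith
  obtain ⟨Q, hQdef⟩ : ∃ Q, Q = Real.sqrt (s ^ 2 - 4) := ⟨_, rfl⟩
  have hQ0 : 0 < Q := hQdef ▸ Real.sqrt_pos.2 hs4
  have hQ2 : Q ^ 2 = s ^ 2 - 4 := by rw [hQdef]; exact Real.sq_sqrt hs4.le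
  have hrho : Real.sqrt (1 - 4 / s ^ 2) = Q / s := by
    rw [show 1 - 4 / s ^ 2 = (Q / s) ^ 2 by rw [div_pow, hQ2]; field_simp]
    exact Real.sqrt_sq (by positivity)
  have hQC : (Q : ℂ) ≠ 0 := by exact_mod_cast hQ0.ne'
  have hsC : (s : ℂ) ≠ 0 := by exact_mod_cast hs0.ne'
  refine ⟨⟨?_, ?_⟩, ?_⟩
  · rintro ⟨ψ, hψ, γ, hγ, t₀, t₁, rfl, rfl⟩
    obtain ⟨R, hR, hR0⟩ := R_exists ψ hs
    obtain ⟨hc, hz⟩ := geo_extremal hs hγ R hR hR0 t₀ t₁ hbd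
    have hRQ : R = Q / 2 := by
      rw [hc] at hR
      have : R ^ 2 = (Q / 2) ^ 2 := by
        rw [hR, div_pow, hQ2]; field_simp; ring
      exact (pow_left_inj₀ hR0.le (by positivity) two_ne_zero).1 this
    rw [geo_herm hs hγ R hR hR0, hrho, ← hQdef, hz, hc]
    obtain ⟨k, hk⟩ := Real.cos_eq_zero_iff.1 hz
    refine ⟨-k - 1, ?_⟩
    have hT : s * (t₀ - t₁) / 2 = s / Q * (R * (t₀ - t₁)) := by
      rw [hRQ]; field_simp
    rw [hT]
    have hm : π / 2 + ((-k - 1 : ℤ) : ℝ) * π = -(R * (t₀ - t₁)) := by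
      rw [hk]; push_cast; ring
    rw [hm]
    generalize R * (t₀ - t₁) = θ at *
    have e1 : Complex.exp (Complex.I * (((1 - s / Q) * -θ : ℝ) : ℂ)) =
        Complex.exp (Complex.I * ((s / Q * θ : ℝ) : ℂ)) * (-(Complex.I * Real.sin θ)) := by
      have : -(Complex.I * (Real.sin θ : ℂ)) = Complex.exp (-θ * Complex.I) := by
        rw [← Complex.cos_sub_sin_I, ← Complex.ofReal_cos, ← Complex.ofReal_sin, hz]
        push_cast; ring
      rw [this, ← Complex.exp_add]
      congr 1; push_cast; ring
    have e2 : (2 / s - s / 2) / R = -(Q / s) := by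
      rw [hRQ]; field_simp; linarith
    rw [e1, e2]
    push_cast
    ring
  · rintro ⟨m, hm⟩
    obtain ⟨θ, hθ⟩ : ∃ θ, θ = π / 2 + (m : ℝ) * π := ⟨_, rfl⟩
    rw [← hθ, hrho, ← hQdef] at hm
    have hz : Real.cos θ = 0 := Real.cos_eq_zero_iff.2 ⟨m, by rw [hθ]; ring⟩
    have hS : Real.sin θ ^ 2 = 1 := by have := Real.sin_sq_add_cos_sq θ; rw [hz] at this; linarith
    have hSC : (Real.sin θ : ℂ) ^ 2 = 1 := by exact_mod_cast hS
    have hcos : Real.cos (Real.arccos (2 / s)) = 2 / s :=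
      Real.cos_arccos (by have : 0 < 2 / s := by positivity
                          linarith) (by rw [div_le_one hs0]; exact hs.le)
    have ep : Complex.exp (Complex.I * θ) = Complex.I * Real.sin θ := by
      rw [mul_comm, ← Complex.cos_add_sin_I, ← Complex.ofReal_cos, ← Complex.ofReal_sin, hz]
      push_cast; ring
    have em : Complex.exp (-(Complex.I * θ)) = -(Complex.I * Real.sin θ) := by
      rw [show -(Complex.I * θ) = -θ * Complex.I by ring, ← Complex.cos_sub_sin_I,
        ← Complex.ofReal_cos, ← Complex.ofReal_sin, hz]
      push_cast; ring
    have hI := Complex.I_sq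
    have hR : (Q / 2) ^ 2 = s ^ 2 / 4 + 1 - s * Real.cos (Real.arccos (2 / s)) := by
      rw [hcos, div_pow, hQ2]; field_simp; ring
    have hv : ‖(-(Complex.I * Real.sin θ) * Complex.exp (Complex.I * ((-(s / Q * θ) : ℝ) : ℂ))) • q₁‖ = 1 := by
      rw [norm_smul, hq₁, ← em, norm_mul, mul_comm Complex.I ((-(s / Q * θ) : ℝ) : ℂ), Complex.norm_exp_ofReal_mul_I]
      rw [show -(Complex.I * (θ : ℂ)) = ((-θ : ℝ) : ℂ) * Complex.I by push_cast; ring,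
        Complex.norm_exp_ofReal_mul_I]
      norm_num
    have hin : inner ℂ q₀ ((-(Complex.I * Real.sin θ) *
        Complex.exp (Complex.I * ((-(s / Q * θ) : ℝ) : ℂ))) • q₁)
        = (((Real.cos (Real.arccos (2 / s)) - s / 2) / (Q / 2) : ℝ) : ℂ) := by
      have e2 : (2 / s - s / 2) / (Q / 2) = -(Q / s) := by
        field_simp; linarith
      rw [hcos, e2, inner_smul_right, ← inner_conj_symm]
      have hm' : inner ℂ q₁ q₀ = _ := hm
      rw [hm', map_mul, Complex.conj_ofReal, ← Complex.exp_conj, map_mul, Complex.conj_I,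
        Complex.conj_ofReal]
      have e3 : Complex.exp (-Complex.I * (((1 - s / Q) * θ : ℝ) : ℂ)) =
        Complex.exp (-(Complex.I * θ)) * Complex.exp (Complex.I * ((s / Q * θ : ℝ) : ℂ)) := by
        rw [← Complex.exp_add]; congr 1; push_cast; ring
      have e4 : Complex.exp (Complex.I * ((-(s / Q * θ) : ℝ) : ℂ)) *
        Complex.exp (Complex.I * ((s / Q * θ : ℝ) : ℂ)) = 1 := by
        rw [← Complex.exp_add, ← Complex.exp_zero]; congr 1; push_cast; ring
      rw [e3, em]
      generalize Complex.exp (Complex.I * ((-(s / Q * θ) : ℝ) : ℂ)) = A at *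
      generalize Complex.exp (Complex.I * ((s / Q * θ : ℝ) : ℂ)) = B at *
      rw [Complex.ofReal_neg]
      generalize ((Q / s : ℝ) : ℂ) = r at *
      generalize ((Real.sin θ : ℝ) : ℂ) = S at *
      linear_combination (Complex.I ^ 2 * S ^ 2 * r) * e4 + S ^ 2 * r * hI - r * hSC
    refine ⟨Real.arccos (2 / s), ⟨Real.arccos_nonneg _, Real.arccos_le_pi _⟩, _,
      geo_exists q₀ _ (Q / 2) hR (by positivity) hq₀ hv hin, 0, θ / (Q / 2), ?_, ?_⟩
    · simp only [Complex.ofReal_zero, mul_zero, Complex.exp_zero, one_smul]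
      module
    · have e5 : Complex.exp (Complex.I * (s / 2 + (Q / 2 : ℝ)) * (θ / (Q / 2) : ℝ)) =
          Complex.exp (Complex.I * ((s / Q * θ : ℝ) : ℂ)) * Complex.exp (Complex.I * θ) := by
        rw [← Complex.exp_add]; congr 1; push_cast; field_simp
      have e6 : Complex.exp (Complex.I * (s / 2 - (Q / 2 : ℝ)) * (θ / (Q / 2) : ℝ)) =
          Complex.exp (Complex.I * ((s / Q * θ : ℝ) : ℂ)) * Complex.exp (-(Complex.I * θ)) := by
        rw [← Complex.exp_add]; congr 1; push_cast; field_simp; ring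
      have e4 : Complex.exp (Complex.I * ((-(s / Q * θ) : ℝ) : ℂ)) *
        Complex.exp (Complex.I * ((s / Q * θ : ℝ) : ℂ)) = 1 := by
        rw [← Complex.exp_add, ← Complex.exp_zero]; congr 1; push_cast; ring
      simp only [e5, e6, ep, em]
      generalize Complex.exp (Complex.I * ((-(s / Q * θ) : ℝ) : ℂ)) = A at *
      generalize Complex.exp (Complex.I * ((s / Q * θ : ℝ) : ℂ)) = B at *
      generalize ((Real.sin θ : ℝ) : ℂ) = S at *
      match_scalars
      · ring
      · linear_combination (-Complex.I ^ 2 * S ^ 2) * e4 - S ^ 2 * hI + hSC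
  · rintro ψ hψ γ hγ ⟨t₀, t₁, rfl, rfl⟩
    obtain ⟨R, hR, hR0⟩ := R_exists ψ hs
    obtain ⟨hc, -⟩ := geo_extremal hs hγ R hR hR0 t₀ t₁ hbd
    rw [← hc, Real.arccos_cos hψ.1 hψ.2]
end
end

section
/- Let s > 0. Define ρ_s : (0,π) → ℝ by ρ_s(ψ) := (s/2 − |C_s(ψ)|)/(s/2 + |C_s(ψ)|), where |C_s(ψ)| = sqrt(s²/4 + 1 − s·cos ψ). Then ρ_s is strictly monotonically decreasing and is a bijection from (0,π) onto the open interval (ρ_s⁻, ρ_s⁺), where ρ_s⁻ = −1/(1+s), and ρ_s⁺ = s − 1 if 0 < s ≤ 2 while ρ_s⁺ = 1/(s−1) if s ≥ 2. -/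
noncomputable section

open scoped Real

/-- the rotation number `ρ_s(ψ) = (s/2 − |C_s(ψ)|)/(s/2 + |C_s(ψ)|)`
is strictly decreasing on `(0,π)` and a bijection onto `(ρ_s⁻, ρ_s⁺)` with
`ρ_s⁻ = −1/(1+s)` and `ρ_s⁺ = s − 1` for `s ≤ 2`, `ρ_s⁺ = 1/(s−1)` for `s ≥ 2`. -/
theorem stmt_10 (s : ℝ) (hs : 0 < s) :
    StrictAntiOn (fun ψ : ℝ => (s / 2 - normC s ψ) / (s / 2 + normC s ψ))
      (Set.Ioo 0 π) ∧
    Set.BijOn (fun ψ : ℝ => (s / 2 - normC s ψ) / (s / 2 + normC s ψ))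
      (Set.Ioo 0 π)
      (Set.Ioo (-(1 / (1 + s))) (if s ≤ 2 then s - 1 else 1 / (s - 1))) := by
  have hnn : ∀ ψ, 0 ≤ normC s ψ := fun ψ => Real.sqrt_nonneg _
  have hmono : StrictMonoOn (fun ψ => normC s ψ) (Set.Icc 0 π) := by
    intro a ha b hb hab
    have hc := Real.strictAntiOn_cos ha hb hab
    have h1 := Real.cos_le_one a
    refine Real.sqrt_lt_sqrt ?_ ?_
    · nlinarith [sq_nonneg (s / 2 - 1)]
    · nlinarith
  have hanti : StrictAntiOn (fun ψ : ℝ => (s / 2 - normC s ψ) / (s / 2 + normC s ψ))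
      (Set.Icc 0 π) := by
    intro a ha b hb hab
    have h := hmono ha hb hab
    have h1 := hnn a
    have h2 := hnn b
    simp only at h ⊢
    rw [div_lt_div_iff₀ (by linarith) (by linarith)]
    nlinarith
  have hcont : Continuous (fun ψ : ℝ => (s / 2 - normC s ψ) / (s / 2 + normC s ψ)) := by
    have hn : Continuous (fun ψ => normC s ψ) := by
      unfold normC
      fun_prop
    refine Continuous.div (by fun_prop) (by fun_prop) ?_
    intro ψ
    have := hnn ψ
    linarith
  have h0 : (s / 2 - normC s 0) / (s / 2 + normC s 0)
      = if s ≤ 2 then s - 1 else 1 / (s - 1) := by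
    have e : normC s 0 = |s / 2 - 1| := by
      unfold normC
      rw [← Real.sqrt_sq_eq_abs, Real.cos_zero]
      congr 1
      ring
    rw [e]
    split_ifs with h
    · rw [abs_of_nonpos (by linarith)]
      ring_nf
    · rw [abs_of_pos (by linarith)]
      ring_nf
  have hpi : (s / 2 - normC s π) / (s / 2 + normC s π) = -(1 / (1 + s)) := by
    have e : normC s π = s / 2 + 1 := by
      unfold normC
      rw [← Real.sqrt_sq (show 0 ≤ s / 2 + 1 by linarith), Real.cos_pi]
      congr 1
      ring
    rw [e]
    ring_nf
  have hpos := Real.pi_pos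
  have hanti' := hanti.mono Set.Ioo_subset_Icc_self
  refine ⟨hanti', ?_, hanti'.injOn, ?_⟩
  · intro x hx
    have hx' := Set.Ioo_subset_Icc_self hx
    rw [← h0, ← hpi]
    exact ⟨hanti hx' (Set.right_mem_Icc.2 hpos.le) hx.2,
      hanti (Set.left_mem_Icc.2 hpos.le) hx' hx.1⟩
  · rw [← h0, ← hpi]
    exact intermediate_value_Ioo' hpos.le hcont.continuousOn
end
end

section
/- Let s > 2 and set ψ_max := arccos(2/s) ∈ (0, π/2). Consider Arg(C_s(ψ)) ∈ [0,π], the unique τ with cos τ = (−s/2 + cos ψ)/|C_s(ψ)|. Then: (i) Arg(C_s(0)) = Arg(C_s(π)) = π; (ii) ψ ↦ Arg(C_s(ψ)) is strictly decreasing on [0, ψ_max] and strictly increasing on [ψ_max, π]; (iii) Arg(C_s(ψ_max)) = ψ_max + π/2; and (iv) cos(Arg(C_s(ψ_max))) = −sqrt(1 − 4/s²), so that min over ψ ∈ [0,π] of |cos(Arg(C_s(ψ)))| equals sqrt(1 − 4/s²) and is attained exactly at ψ = ψ_max. -/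
noncomputable section

open scoped Real

theorem G_bounds (s c : ℝ) (hs : 2 < s) (h1 : -1 ≤ c) (h2 : c ≤ 1) :
    -1 ≤ (-s / 2 + c) / Real.sqrt (s ^ 2 / 4 + 1 - s * c) ∧
    (-s / 2 + c) / Real.sqrt (s ^ 2 / 4 + 1 - s * c) ≤ 1 := by
  have hN : 0 < s ^ 2 / 4 + 1 - s * c := by nlinarith [sq_pos_of_pos (sub_pos.2 hs)]
  have hq : 0 < Real.sqrt (s ^ 2 / 4 + 1 - s * c) := Real.sqrt_pos.2 hN
  constructor
  · rw [le_div_iff₀ hq]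
    have : s / 2 - c ≤ Real.sqrt (s ^ 2 / 4 + 1 - s * c) := by
      apply Real.le_sqrt_of_sq_le
      nlinarith
    linarith
  · rw [div_le_one hq]
    linarith

theorem G_lt (s a b : ℝ) (hs : 2 < s) (ha1 : -1 ≤ a) (ha : a ≤ 1) (hb1 : -1 ≤ b) (hb : b ≤ 1)
    (h : (1 - a ^ 2) * (s ^ 2 / 4 + 1 - s * b) < (1 - b ^ 2) * (s ^ 2 / 4 + 1 - s * a)) :
    (-s / 2 + a) / Real.sqrt (s ^ 2 / 4 + 1 - s * a) <
    (-s / 2 + b) / Real.sqrt (s ^ 2 / 4 + 1 - s * b) := by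
  have hA : 0 < s ^ 2 / 4 + 1 - s * a := by nlinarith [sq_pos_of_pos (sub_pos.2 hs)]
  have hB : 0 < s ^ 2 / 4 + 1 - s * b := by nlinarith [sq_pos_of_pos (sub_pos.2 hs)]
  have hA' := Real.sqrt_pos.2 hA
  have hB' := Real.sqrt_pos.2 hB
  rw [div_lt_div_iff₀ hA' hB']
  have : (s / 2 - b) * Real.sqrt (s ^ 2 / 4 + 1 - s * a) <
      (s / 2 - a) * Real.sqrt (s ^ 2 / 4 + 1 - s * b) := by
    refine lt_of_pow_lt_pow_left₀ 2 (mul_nonneg (by linarith) hB'.le) ?_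
    rw [mul_pow, mul_pow, Real.sq_sqrt hA.le, Real.sq_sqrt hB.le]
    nlinarith
  linarith

theorem G_anti (s a b : ℝ) (hs : 2 < s) (ha : 2 / s ≤ a) (hab : a < b) (hb : b ≤ 1) :
    (-s / 2 + b) / Real.sqrt (s ^ 2 / 4 + 1 - s * b) <
    (-s / 2 + a) / Real.sqrt (s ^ 2 / 4 + 1 - s * a) := by
  have hm : 0 < 2 / s := by positivity
  apply G_lt <;> try linarith
  obtain ⟨m, hmd⟩ : ∃ m, m = 2 / s := ⟨_, rfl⟩
  have hms : m * s = 2 := by rw [hmd]; field_simp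
  rw [← hmd] at ha hm
  have hm1 : m < 1 := by nlinarith
  have h3 : 0 < (s ^ 2 / 4 + 1) * (a + b) - s * (1 + a * b) := by
    have e : (s ^ 2 / 4 + 1) * (a + b) - s * (1 + a * b)
      = s * ((s / 2 - m) / 2 * ((a - m) + (b - m)) - (a - m) * (b - m)) := by
      linear_combination (s / 2 - (a + b) / 2) * hms
    rw [e]
    apply mul_pos (by linarith)
    have : (1 - m) / 2 < (s / 2 - m) / 2 := by linarith
    nlinarith [mul_nonneg (sub_nonneg.2 ha) (sub_nonneg.2 hb),
      mul_nonneg (sub_nonneg.2 (ha.trans hab.le)) (sub_nonneg.2 (hab.le.trans hb)),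
      mul_pos (sub_pos.2 this) (show 0 < (a - m) + (b - m) by linarith)]
  nlinarith [mul_pos (sub_pos.2 hab) h3]

theorem G_mono (s a b : ℝ) (hs : 2 < s) (ha : -1 ≤ a) (hab : a < b) (hb : b ≤ 2 / s) :
    (-s / 2 + a) / Real.sqrt (s ^ 2 / 4 + 1 - s * a) <
    (-s / 2 + b) / Real.sqrt (s ^ 2 / 4 + 1 - s * b) := by
  have hm : 0 < 2 / s := by positivity
  have hm1 : 2 / s < 1 := by rw [div_lt_one] <;> linarith
  apply G_lt <;> try linarith
  obtain ⟨m, hmd⟩ : ∃ m, m = 2 / s := ⟨_, rfl⟩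
  have hms : m * s = 2 := by rw [hmd]; field_simp
  rw [← hmd] at hb hm hm1
  have h3 : 0 < s * (1 + a * b) - (s ^ 2 / 4 + 1) * (a + b) := by
    have e : s * (1 + a * b) - (s ^ 2 / 4 + 1) * (a + b)
      = s * ((s / 2 - m) / 2 * ((m - a) + (m - b)) + (m - a) * (m - b)) := by
      linear_combination (-(s / 2 - (a + b) / 2)) * hms
    rw [e]
    apply mul_pos (by linarith)
    have : 0 < (s / 2 - m) / 2 := by linarith
    nlinarith [mul_nonneg (sub_nonneg.2 hb) (sub_nonneg.2 (hab.le.trans hb)),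
      mul_pos this (show 0 < (m - a) + (m - b) by linarith)]
  nlinarith [mul_pos (sub_pos.2 hab) h3]

/-- behaviour of `ψ ↦ Arg(C_s(ψ))` for `s > 2`, with
`ψ_max = arccos(2/s) ∈ (0,π/2)`: endpoint values `π`, strict monotonicity on the
two subintervals, the value `ψ_max + π/2` at `ψ_max`, whose cosine is
`−sqrt(1 − 4/s²)`, and minimality of `|cos(Arg(C_s(ψ)))|` exactly at `ψ_max`. -/
theorem stmt_12 (s : ℝ) (hs : 2 < s) :
    Real.arccos (2 / s) ∈ Set.Ioo 0 (π / 2) ∧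
    argC s 0 = π ∧ argC s π = π ∧
    StrictAntiOn (argC s) (Set.Icc 0 (Real.arccos (2 / s))) ∧
    StrictMonoOn (argC s) (Set.Icc (Real.arccos (2 / s)) π) ∧
    argC s (Real.arccos (2 / s)) = Real.arccos (2 / s) + π / 2 ∧
    Real.cos (argC s (Real.arccos (2 / s))) = -Real.sqrt (1 - 4 / s ^ 2) ∧
    (∀ ψ ∈ Set.Icc (0 : ℝ) π, Real.sqrt (1 - 4 / s ^ 2) ≤ |Real.cos (argC s ψ)|) ∧
    (∀ ψ ∈ Set.Icc (0 : ℝ) π,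
      |Real.cos (argC s ψ)| = Real.sqrt (1 - 4 / s ^ 2) → ψ = Real.arccos (2 / s)) := by
  have hm : 0 < 2 / s := by positivity
  have hm1 : 2 / s < 1 := by rw [div_lt_one] <;> linarith
  have hP0 : 0 < Real.arccos (2 / s) := Real.arccos_pos.2 hm1
  have hP1 : Real.arccos (2 / s) < π / 2 := Real.arccos_lt_pi_div_two.2 hm
  have hcP : Real.cos (Real.arccos (2 / s)) = 2 / s := Real.cos_arccos (by linarith) hm1.le
  have hpi := Real.pi_pos
  have anti : StrictAntiOn (argC s) (Set.Icc 0 (Real.arccos (2 / s))) := by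
    intro x hx y hy hxy
    have hc : Real.cos y < Real.cos x :=
      Real.cos_lt_cos_of_nonneg_of_le_pi hx.1 (by linarith [hy.2]) hxy
    have hy2 : 2 / s ≤ Real.cos y := by
      rw [← hcP]
      exact Real.cos_le_cos_of_nonneg_of_le_pi hy.1 (by linarith) hy.2
    exact Real.arccos_lt_arccos (G_bounds s _ hs (Real.neg_one_le_cos x) (Real.cos_le_one x)).1
      (G_anti s _ _ hs hy2 hc (Real.cos_le_one x))
      (G_bounds s _ hs (Real.neg_one_le_cos y) (Real.cos_le_one y)).2
  have mono : StrictMonoOn (argC s) (Set.Icc (Real.arccos (2 / s)) π) := by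
    intro x hx y hy hxy
    have hc : Real.cos y < Real.cos x :=
      Real.cos_lt_cos_of_nonneg_of_le_pi (by linarith [hx.1]) hy.2 hxy
    have hx2 : Real.cos x ≤ 2 / s := by
      rw [← hcP]
      exact Real.cos_le_cos_of_nonneg_of_le_pi hP0.le hx.2 hx.1
    exact Real.arccos_lt_arccos (G_bounds s _ hs (Real.neg_one_le_cos y) (Real.cos_le_one y)).1
      (G_mono s _ _ hs (Real.neg_one_le_cos y) hc hx2)
      (G_bounds s _ hs (Real.neg_one_le_cos x) (Real.cos_le_one x)).2
  have hsq : 0 < 1 - 4 / s ^ 2 := by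
    have : 4 / s ^ 2 = (2 / s) ^ 2 := by ring
    rw [this]; nlinarith
  have hG : (-s / 2 + 2 / s) / Real.sqrt (s ^ 2 / 4 + 1 - s * (2 / s))
      = -Real.sqrt (1 - 4 / s ^ 2) := by
    have e1 : s ^ 2 / 4 + 1 - s * (2 / s) = (s / 2) ^ 2 * (1 - 4 / s ^ 2) := by
      field_simp; ring
    have e2 : -s / 2 + 2 / s = - (s / 2) * (1 - 4 / s ^ 2) := by
      field_simp; ring
    rw [e1, e2, Real.sqrt_mul (by positivity), Real.sqrt_sq (by linarith)]
    have hq := Real.sqrt_pos.2 hsq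
    have hq2 := Real.mul_self_sqrt hsq.le
    rw [div_eq_iff (by positivity)]
    linear_combination (s / 2) * hq2
  have hval : argC s (Real.arccos (2 / s)) = Real.arccos (2 / s) + π / 2 := by
    have : (-s / 2 + Real.cos (Real.arccos (2 / s))) / normC s (Real.arccos (2 / s))
        = Real.cos (Real.arccos (2 / s) + π / 2) := by
      rw [Real.cos_add_pi_div_two, Real.sin_arccos, normC, hcP, hG]
      congr 3; ring
    rw [argC, this, Real.arccos_cos (by linarith) (by linarith)]
  have hcos : Real.cos (argC s (Real.arccos (2 / s))) = -Real.sqrt (1 - 4 / s ^ 2) := by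
    rw [hval, Real.cos_add_pi_div_two, Real.sin_arccos]
    congr 3; ring
  have hlt : ∀ ψ ∈ Set.Icc (0 : ℝ) π, ψ ≠ Real.arccos (2 / s) →
      Real.sqrt (1 - 4 / s ^ 2) < |Real.cos (argC s ψ)| := by
    intro ψ hψ hne
    have h1 : argC s (Real.arccos (2 / s)) < argC s ψ := by
      rcases lt_or_gt_of_ne hne with h | h
      · exact anti ⟨hψ.1, h.le⟩ ⟨hP0.le, le_rfl⟩ h
      · exact mono ⟨le_rfl, by linarith⟩ ⟨h.le, hψ.2⟩ h
    have h2 : Real.cos (argC s ψ) < Real.cos (argC s (Real.arccos (2 / s))) := Real.cos_lt_cos_of_nonneg_of_le_pi (Real.arccos_nonneg _) (Real.arccos_le_pi _) h1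
    rw [hcos] at h2
    linarith [neg_le_abs (Real.cos (argC s ψ))]
  refine ⟨⟨hP0, hP1⟩, ?_, ?_, anti, mono, hval, hcos, ?_, ?_⟩
  · have e : s ^ 2 / 4 + 1 - s * 1 = (s / 2 - 1) ^ 2 := by ring
    rw [argC, normC, Real.cos_zero, e, Real.sqrt_sq (by linarith), Real.arccos_eq_pi]
    rw [div_le_iff₀ (by linarith)]; linarith
  · have e : s ^ 2 / 4 + 1 - s * (-1) = (s / 2 + 1) ^ 2 := by ring
    rw [argC, normC, Real.cos_pi, e, Real.sqrt_sq (by linarith), Real.arccos_eq_pi]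
    rw [div_le_iff₀ (by linarith)]; linarith
  · intro ψ hψ
    by_cases h : ψ = Real.arccos (2 / s)
    · rw [h, hcos, abs_neg]; exact le_abs_self _
    · exact (hlt ψ hψ h).le
  · intro ψ hψ h
    by_contra hne
    exact absurd h (hlt ψ hψ hne).ne'
end
end

section
/- Let q₀, q₁ be points on the unit sphere S³ ⊂ ℂ², and let π denote the Hopf map π(z₁,z₂) := (conj(z₁)·z₂, (|z₁|² − |z₂|²)/2) ∈ ℂ × ℝ ≅ ℝ³. Then: (i) |π(q)| = 1/2 for every q ∈ S³, i.e. π takes values in the sphere S²(1/2) of radius 1/2; (ii) 4·⟨π(q₀), π(q₁)⟩_{ℝ³} = 2·|⟨q₀,q₁⟩|² − 1; consequently (iii) the spherical (geodesic) distance on S²(1/2) between π(q₀) and π(q₁), namely (1/2)·arccos(4·⟨π(q₀),π(q₁)⟩_{ℝ³}), equals arccos(|⟨q₀,q₁⟩|). -/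
noncomputable section

open scoped Real

/-- Hermitian product on `ℂ²`, ℂ-linear in the first argument (paper convention). -/
def hermC2 (x y : ℂ × ℂ) : ℂ :=
  x.1 * (starRingEnd ℂ) y.1 + x.2 * (starRingEnd ℂ) y.2

/-- The Hopf map `π(z₁,z₂) = (conj(z₁)·z₂, (|z₁|² − |z₂|²)/2) ∈ ℂ × ℝ ≅ ℝ³`. -/
def hopfMap (z : ℂ × ℂ) : ℂ × ℝ :=
  ((starRingEnd ℂ) z.1 * z.2, (‖z.1‖ ^ 2 - ‖z.2‖ ^ 2) / 2)

/-- Euclidean inner product on `ℂ × ℝ ≅ ℝ³`. -/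
def innerR3 (p q : ℂ × ℝ) : ℝ := ((starRingEnd ℂ) p.1 * q.1).re + p.2 * q.2

/-- the Hopf map takes values in the sphere of radius `1/2`, the
relation `4⟨π(q₀),π(q₁)⟩ = 2|⟨q₀,q₁⟩|² − 1` holds, and hence the spherical
distance on `S²(1/2)` between `π(q₀)` and `π(q₁)` equals `arccos |⟨q₀,q₁⟩|`. -/
theorem stmt_13 (q₀ q₁ : ℂ × ℂ)
    (hq₀ : ‖q₀.1‖ ^ 2 + ‖q₀.2‖ ^ 2 = 1)
    (hq₁ : ‖q₁.1‖ ^ 2 + ‖q₁.2‖ ^ 2 = 1) :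
    (∀ q : ℂ × ℂ, ‖q.1‖ ^ 2 + ‖q.2‖ ^ 2 = 1 →
      Real.sqrt (‖(hopfMap q).1‖ ^ 2 + (hopfMap q).2 ^ 2) = 1 / 2) ∧
    4 * innerR3 (hopfMap q₀) (hopfMap q₁) = 2 * ‖hermC2 q₀ q₁‖ ^ 2 - 1 ∧
    (1 / 2) * Real.arccos (4 * innerR3 (hopfMap q₀) (hopfMap q₁)) =
      Real.arccos (‖hermC2 q₀ q₁‖) := by
  have key : 4 * innerR3 (hopfMap q₀) (hopfMap q₁) = 2 * ‖hermC2 q₀ q₁‖ ^ 2 - 1 := by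
    have h : 2 * ‖hermC2 q₀ q₁‖ ^ 2 - 4 * innerR3 (hopfMap q₀) (hopfMap q₁)
        = (‖q₀.1‖ ^ 2 + ‖q₀.2‖ ^ 2) * (‖q₁.1‖ ^ 2 + ‖q₁.2‖ ^ 2) := by
      simp only [hermC2, innerR3, hopfMap, Complex.sq_norm, Complex.normSq_apply,
        Complex.add_re, Complex.add_im, Complex.mul_re, Complex.mul_im,
        Complex.conj_re, Complex.conj_im]
      ring
    rw [hq₀, hq₁] at h
    linarith
  have hle : ‖hermC2 q₀ q₁‖ ≤ 1 := by
    have h : ‖hermC2 q₀ q₁‖ ≤ ‖q₀.1‖ * ‖q₁.1‖ + ‖q₀.2‖ * ‖q₁.2‖ := by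
      refine (norm_add_le _ _).trans_eq ?_
      simp only [norm_mul, RCLike.norm_conj]
    nlinarith [sq_nonneg (‖q₀.1‖ - ‖q₁.1‖), sq_nonneg (‖q₀.2‖ - ‖q₁.2‖)]
  refine ⟨?_, key, ?_⟩
  · intro q hq
    have h : ‖(hopfMap q).1‖ ^ 2 + (hopfMap q).2 ^ 2 = (1 / 2) ^ 2 := by
      simp only [hopfMap, norm_mul, RCLike.norm_conj]
      have : (‖q.1‖ ^ 2 + ‖q.2‖ ^ 2) ^ 2 = 1 := by rw [hq]; norm_num
      linear_combination this / 4
    rw [h, Real.sqrt_sq (by norm_num)]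
  · have h0 : 0 ≤ ‖hermC2 q₀ q₁‖ := norm_nonneg _
    have hc : Real.cos (2 * Real.arccos ‖hermC2 q₀ q₁‖) = 2 * ‖hermC2 q₀ q₁‖ ^ 2 - 1 := by
      rw [Real.cos_two_mul, Real.cos_arccos (by linarith) hle]
    have h2 : Real.arccos ‖hermC2 q₀ q₁‖ ≤ π / 2 := Real.arccos_le_pi_div_two.2 h0
    rw [key, ← hc, Real.arccos_cos (by linarith [Real.arccos_nonneg ‖hermC2 q₀ q₁‖]) (by linarith)]
    ring
end
end

section
/- Let s ≥ 0 and ψ ∈ (0,π), set τ := Arg(C_s(ψ)) ∈ (0,π), and let γ : ℝ → ℂ² be the unit-speed magnetic geodesic of strength s and contact angle ψ given by γ(t) = e^{i s t/2}·(e^{−i|C_s(ψ)|t}·w₀ + e^{i|C_s(ψ)|t}·w₁) with w₀ := (sin(τ/2), 0) and w₁ := (0, cos(τ/2)). Then the Hopf projection satisfies π(γ(t)) = ( (1/2)·sin τ · e^{2 i |C_s(ψ)| t}, −(1/2)·cos τ ) for all t ∈ ℝ; in particular π∘γ traverses, at constant angular speed 2|C_s(ψ)|, a geodesic circle on S²(1/2)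 of spherical radius τ/2 = (1/2)·Arg(C_s(ψ)). Moreover, for ψ ∈ (0,π) one has the identity 2·cos(Arg(C_s(ψ)))/sin(Arg(C_s(ψ))) = (2·cos ψ − s)/sin ψ. -/
noncomputable section

open scoped Real

/-- The magnetic geodesic on `S³ ⊂ ℂ²` with `w₀ = (sin(τ/2),0)`, `w₁ = (0,cos(τ/2))`,
`τ = Arg(C_s(ψ))`. -/
def magCurve3 (s ψ : ℝ) (t : ℝ) : ℂ × ℂ :=
  Complex.exp (Complex.I * s * t / 2) •
    (Complex.exp (-(Complex.I * normC s ψ * t)) •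
        (((Real.sin (argC s ψ / 2) : ℝ) : ℂ), (0 : ℂ)) +
     Complex.exp (Complex.I * normC s ψ * t) •
        ((0 : ℂ), ((Real.cos (argC s ψ / 2) : ℝ) : ℂ)))

/-- the Hopf projection of the magnetic geodesic of strength `s`
and contact angle `ψ ∈ (0,π)` traverses, at constant angular speed `2|C_s(ψ)|`,
the geodesic circle of spherical radius `Arg(C_s(ψ))/2` centered at `(0,−1/2)`;
moreover `2·cos(Arg C_s(ψ))/sin(Arg C_s(ψ)) = (2cos ψ − s)/sin ψ`. -/
theorem stmt_14 (s ψ : ℝ) (hs : 0 ≤ s) (hψ : ψ ∈ Set.Ioo 0 π) :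
    argC s ψ ∈ Set.Ioo 0 π ∧
    (∀ t : ℝ, hopfMap (magCurve3 s ψ t) =
      ((1 / 2 : ℂ) * ((Real.sin (argC s ψ) : ℝ) : ℂ) *
          Complex.exp (2 * Complex.I * normC s ψ * t),
        -(1 / 2) * Real.cos (argC s ψ))) ∧
    2 * Real.cos (argC s ψ) / Real.sin (argC s ψ) =
      (2 * Real.cos ψ - s) / Real.sin ψ := by
  have hsin : 0 < Real.sin ψ := Real.sin_pos_of_pos_of_lt_pi hψ.1 hψ.2
  have hsc := Real.sin_sq_add_cos_sq ψ
  have hrad : s ^ 2 / 4 + 1 - s * Real.cos ψ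
      = (-s / 2 + Real.cos ψ) ^ 2 + Real.sin ψ ^ 2 := by linear_combination -hsc
  have hradpos : 0 < s ^ 2 / 4 + 1 - s * Real.cos ψ := by rw [hrad]; positivity
  have hN : 0 < normC s ψ := Real.sqrt_pos.mpr hradpos
  have hN2 : normC s ψ ^ 2 = (-s / 2 + Real.cos ψ) ^ 2 + Real.sin ψ ^ 2 := by
    rw [← hrad]; exact Real.sq_sqrt hradpos.le
  have habs : |-s / 2 + Real.cos ψ| < normC s ψ := by
    apply abs_lt_of_sq_lt_sq _ hN.le
    rw [hN2]; have := pow_pos hsin 2; linarith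
  obtain ⟨h1, h2⟩ := abs_lt.mp habs
  have l1 : -1 < (-s / 2 + Real.cos ψ) / normC s ψ := by
    rw [lt_div_iff₀ hN]; linarith
  have l2 : (-s / 2 + Real.cos ψ) / normC s ψ < 1 := by
    rw [div_lt_iff₀ hN]; linarith
  have hcos : Real.cos (argC s ψ) = (-s / 2 + Real.cos ψ) / normC s ψ :=
    Real.cos_arccos l1.le l2.le
  have hsinτ : Real.sin (argC s ψ) = Real.sin ψ / normC s ψ := by
    unfold argC
    rw [Real.sin_arccos, Real.sqrt_eq_iff_mul_self_eq_of_pos (by positivity)]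
    field_simp
    linarith
  have hpos : 0 < argC s ψ := Real.arccos_pos.mpr l2
  have hlt : argC s ψ < π := by
    refine lt_of_le_of_ne (Real.arccos_le_pi _) ?_
    intro h
    rw [h, Real.cos_pi] at hcos
    linarith
  refine ⟨⟨hpos, hlt⟩, ?_, ?_⟩
  · intro t
    have e1 : ∀ x : ℝ, ‖Complex.exp (Complex.I * x)‖ = 1 := by
      intro x; rw [mul_comm]; exact Complex.norm_exp_ofReal_mul_I x
    have n1 : ‖Complex.exp (Complex.I * s * t / 2)‖ = 1 := by
      rw [← e1 (s * t / 2)]; push_cast; ring_nf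
    have n2 : ‖Complex.exp (Complex.I * normC s ψ * t)‖ = 1 := by
      rw [← e1 (normC s ψ * t)]; push_cast; ring_nf
    have n3 : ‖Complex.exp (-(Complex.I * normC s ψ * t))‖ = 1 := by
      rw [← e1 (-(normC s ψ * t))]; push_cast; ring_nf
    have hτ : argC s ψ = 2 * (argC s ψ / 2) := by ring
    unfold hopfMap magCurve3
    refine Prod.ext ?_ ?_
    · have c1 : (starRingEnd ℂ) (Complex.exp (Complex.I * s * t / 2)) *
          Complex.exp (Complex.I * s * t / 2) = 1 := by
        rw [← Complex.normSq_eq_conj_mul_self, Complex.normSq_eq_norm_sq, n1]; norm_num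
      have c2 : (starRingEnd ℂ) (Complex.exp (-(Complex.I * normC s ψ * t))) =
          Complex.exp (Complex.I * normC s ψ * t) := by
        rw [← Complex.exp_conj]; simp
      have c3 : Complex.exp (2 * Complex.I * normC s ψ * t) =
          Complex.exp (Complex.I * normC s ψ * t) * Complex.exp (Complex.I * normC s ψ * t) := by
        rw [← Complex.exp_add]; ring_nf
      have c4 : ((Real.sin (argC s ψ) : ℝ) : ℂ) =
          2 * ((Real.sin (argC s ψ / 2) : ℝ) : ℂ) * ((Real.cos (argC s ψ / 2) : ℝ) : ℂ) := by
        conv_lhs => rw [hτ, Real.sin_two_mul]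
        push_cast; ring
      rw [c3, c4]
      simp only [Prod.smul_mk, Prod.mk_add_mk, smul_eq_mul, mul_zero, add_zero, zero_add,
        map_mul, c2, Complex.conj_ofReal]
      linear_combination (Complex.exp (Complex.I * normC s ψ * t) ^ 2 *
        ((Real.sin (argC s ψ / 2) : ℝ) : ℂ) * ((Real.cos (argC s ψ / 2) : ℝ) : ℂ)) * c1
    · have c4 : Real.cos (argC s ψ) =
          Real.cos (argC s ψ / 2) ^ 2 - Real.sin (argC s ψ / 2) ^ 2 := by
        conv_lhs => rw [hτ, Real.cos_two_mul']
      rw [c4]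
      simp only [Prod.smul_mk, Prod.mk_add_mk, smul_eq_mul, mul_zero, add_zero, zero_add,
        norm_mul, n1, n2, n3, one_mul, Complex.norm_real, Real.norm_eq_abs, sq_abs]
      ring
  · rw [hcos, hsinτ]
    field_simp
    ring
end
end
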